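/- Let q = p^m ≡ 1 (mod 16) be a prime power (i.e., q = 8f+1 with f even) in which 2 is NOT a quartic residue (2 ∉ C_0^4). Let a be the integer with q = a² + 2b² (b ∈ ℤ), a ≡ 1 (mod 4), and suppose a = −3. Then there exists an integer y with q = x² + 4y² (x ≡ 1 mod 4) such that D = {C_0^8, C_1^8, C_4^8, C_5^8} satisfies Σ_{i≠j} Δ(D_i,D_j) = ((3q−3+8y)/16)·C_0^2 + ((3q−3−8y)/16)·C_1^2 as multisets; in particular, D is a (q,4,(q−1)/8;(3q−3+8y)/16,(3q−3−8y)/16)-EPDF relative to C_0^2 if y ≠ 0, and a (q,4,(q−1)/8,(3q−3)/16)-EDF if y = 0. -/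

import Mathlib

open Finset

section Defs

variable {G : Type*} [AddCommGroup G] [Fintype G] [DecidableEq G]

/-- The multiset `Δ(D)` of internal differences `x - y` (for `x ≠ y` in `D`). -/
def intDiff (D : Finset G) : Multiset G :=
  ((D ×ˢ D).filter (fun p => p.1 ≠ p.2)).val.map (fun p => p.1 - p.2)

/-- The multiset `Δ(D, E)` of external differences `x - y` for `x ∈ D`, `y ∈ E`. -/
def extDiff (D E : Finset G) : Multiset G :=
  (D ×ˢ E).val.map (fun p => p.1 - p.2)

/-- The finset `G^*` of nonzero elements of `G`. -/
def Gstar (G : Type*) [AddCommGroup G] [Fintype G] [DecidableEq G] : Finset G :=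
  Finset.univ.erase 0

/-- `A` is a `(v, k, lam, mu)` partial difference set in `G`:
`Δ(A) = lam • A^* + mu • (G^* \ A)`. -/
def IsPDS (A : Finset G) (v k lam mu : ℕ) : Prop :=
  Fintype.card G = v ∧ A.card = k ∧
    intDiff A = lam • (A.erase 0).val + mu • (Gstar G \ A).val

/-- `D` is a `(v, k, lam, mu)` skew partial difference set corresponding to the
`(v, k, lam, mu)`-PDS `A`: `Δ(D) = lam • A^* + mu • (G^* \ A)`. -/
def IsSkewPDS (D A : Finset G) (v k lam mu : ℕ) : Prop :=
  IsPDS A v k lam mu ∧ D.card = k ∧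
    intDiff D = lam • (A.erase 0).val + mu • (Gstar G \ A).val

/-- `D` is an `(n, m, k₁, …, k_m; lam, mu)` disjoint partial difference family relative
to `T`: the `D i` are pairwise disjoint subsets of `G^*` of sizes `k i`, and
`∑ i, Δ(D i) = lam • T + mu • (G^* \ T)`. -/
def IsDPDF {ι : Type*} [Fintype ι] (D : ι → Finset G) (n m : ℕ) (k : ι → ℕ)
    (T : Finset G) (lam mu : ℕ) : Prop :=
  Fintype.card G = n ∧ Fintype.card ι = m ∧
    (∀ i, (0 : G) ∉ D i) ∧ (∀ i, (D i).card = k i) ∧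
    (Pairwise (fun i j => Disjoint (D i) (D j))) ∧
    ∑ i, intDiff (D i) = lam • T.val + mu • (Gstar G \ T).val

/-- `D` is an `(n, m, k₁, …, k_m; lam, mu)` external partial difference family relative
to `T`: the `D i` are pairwise disjoint subsets of `G^*` of sizes `k i`, and
`∑_{i ≠ j}, Δ(D i, D j) = lam • T + mu • (G^* \ T)`. -/
def IsEPDF {ι : Type*} [Fintype ι] [DecidableEq ι] (D : ι → Finset G) (n m : ℕ)
    (k : ι → ℕ) (T : Finset G) (lam mu : ℕ) : Prop :=
  Fintype.card G = n ∧ Fintype.card ι = m ∧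
    (∀ i, (0 : G) ∉ D i) ∧ (∀ i, (D i).card = k i) ∧
    (Pairwise (fun i j => Disjoint (D i) (D j))) ∧
    ∑ i, ∑ j ∈ Finset.univ.erase i, extDiff (D i) (D j)
      = lam • T.val + mu • (Gstar G \ T).val

/-- `D` is an `(n, m, k₁, …, k_m, lam)` disjoint difference family:
`∑ i, Δ(D i) = lam • G^*`. -/
def IsDDF {ι : Type*} [Fintype ι] (D : ι → Finset G) (n m : ℕ) (k : ι → ℕ)
    (lam : ℕ) : Prop :=
  Fintype.card G = n ∧ Fintype.card ι = m ∧
    (∀ i, (0 : G) ∉ D i) ∧ (∀ i, (D i).card = k i) ∧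
    (Pairwise (fun i j => Disjoint (D i) (D j))) ∧
    ∑ i, intDiff (D i) = lam • (Gstar G).val

/-- `D` is an `(n, m, k₁, …, k_m, lam)` external difference family:
`∑_{i ≠ j}, Δ(D i, D j) = lam • G^*`. -/
def IsEDF {ι : Type*} [Fintype ι] [DecidableEq ι] (D : ι → Finset G) (n m : ℕ)
    (k : ι → ℕ) (lam : ℕ) : Prop :=
  Fintype.card G = n ∧ Fintype.card ι = m ∧
    (∀ i, (0 : G) ∉ D i) ∧ (∀ i, (D i).card = k i) ∧
    (Pairwise (fun i j => Disjoint (D i) (D j))) ∧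
    ∑ i, ∑ j ∈ Finset.univ.erase i, extDiff (D i) (D j) = lam • (Gstar G).val

end Defs

section Cyclotomy

variable {F : Type*} [Field F] [Fintype F] [DecidableEq F]

/-- The cyclotomic class `C_i^e = α^i ⟨α^e⟩` of order `e` in the finite field `F`,
with respect to the primitive element `α`.  (Since `α` has multiplicative order at most
`|F| - 1`, letting `j` range over `0, …, |F| - 1` captures the whole class.) -/
def cycClass (α : F) (e i : ℕ) : Finset F :=
  (Finset.range (Fintype.card F)).image (fun j => α ^ (e * j + i))

/-- `α` is a primitive element of the finite field `F`: every nonzero element of `F`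
is a power of `α`. -/
def IsPrimitiveElt (α : F) : Prop :=
  ∀ x : F, x ≠ 0 → ∃ n : ℕ, α ^ n = x

end Cyclotomy

/-!
The count of a nonzero `x` among the external differences of `C_0^8, C_1^8, C_4^8, C_5^8` only
depends on the class of `x` modulo fourth powers, because multiplication by `α^4` permutes the
family. The four counts are therefore determined by their transforms at the characters of order
dividing four, and the count depends only on the quadratic character of `x` exactly when the
transform at a quartic character `θ²` vanishes. The transforms are combinations
of `∑_{x ∈ C_k^8} χ (1 - x)`, hence of the Jacobi sums `J(θ^u, χ)` of an octic character `θ`.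
At `χ = θ²` the hypothesis `θ 4 = -1` (that is, `2` is a square but not a fourth power) makes the
relevant combination a multiple of `A - 3`, where `A` is the rational part of
`J(θ, θ⁴) = A + B √-2`. At `χ = θ⁴` one finds `y` in `J(θ², θ⁴) = ± x ± 2 y i`.

Since `A² + 2 B² = q = 3² + 2 b²` and `p` divides neither `A` (it is `4 g` times the binomial
coefficient `(4 g choose g)` up to sign modulo `p`, where `q = 8 g + 1`) nor `3`, both
representations give `A = ± 3`. The congruence `A ≡ -1 (mod 4)` leaves `A = 3`.
-/

section PrimitiveElements

variable {F : Type*} [Field F] [Fintype F] {α : F}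

namespace IsPrimitiveElt

theorem ne_zero (hα : IsPrimitiveElt α) (hF : 2 < Fintype.card F) : α ≠ 0 := by
  classical
  rintro rfl
  have hsub : (univ : Finset F) ⊆ {0, 1} := fun x _ => by
    by_cases hx : x = 0
    · simp [hx]
    · obtain ⟨n, hn⟩ := hα x hx
      rcases eq_or_ne n 0 with rfl | hn0
      · simp [← hn]
      · exact absurd (hn ▸ zero_pow hn0) hx
  exact absurd ((card_le_card hsub).trans card_le_two) (by rwa [card_univ, not_le])

theorem orderOf_eq (hα : IsPrimitiveElt α) (h0 : α ≠ 0) : orderOf α = Fintype.card F - 1 := by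
  have hgen : ∀ u : Fˣ, u ∈ Subgroup.zpowers (Units.mk0 α h0) := fun u => by
    obtain ⟨n, hn⟩ := hα u u.ne_zero
    exact ⟨n, Units.ext (by simpa using hn)⟩
  rw [← Units.val_mk0 h0, orderOf_units, orderOf_eq_card_of_forall_mem_zpowers hgen,
    Nat.card_units, Nat.card_eq_fintype_card]

theorem pow_eq_pow_iff (hα : IsPrimitiveElt α) (h0 : α ≠ 0) {m n : ℕ} :
    α ^ m = α ^ n ↔ m ≡ n [MOD Fintype.card F - 1] := by
  rw [← hα.orderOf_eq h0, ← Units.val_mk0 h0, orderOf_units, ← pow_eq_pow_iff_modEq, Units.ext_iff,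
    Units.val_pow_eq_pow_val, Units.val_pow_eq_pow_val]

theorem pow_eq_neg_one (hα : IsPrimitiveElt α) (h0 : α ≠ 0) {f : ℕ}
    (hf : Fintype.card F - 1 = 2 * f) : α ^ f = -1 := by
  have hq : 1 < Fintype.card F := Fintype.one_lt_card
  have hone : α ^ f ≠ 1 := fun h =>
    Nat.not_dvd_of_pos_of_lt (by lia) (by lia : f < 2 * f)
      (hf ▸ hα.orderOf_eq h0 ▸ orderOf_dvd_of_pow_eq_one h)
  have hsq : (α ^ f) ^ 2 = 1 := by
    rw [← pow_mul, mul_comm, ← hf, FiniteField.pow_card_sub_one_eq_one α h0]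
  exact (sq_eq_one_iff.1 hsq).resolve_left hone

end IsPrimitiveElt

end PrimitiveElements

section Classes

variable {F : Type*} [Field F] [Fintype F] [DecidableEq F] {α : F} {e k l : ℕ}

theorem ne_zero_of_mem_cycClass (h0 : α ≠ 0) {x : F} (hx : x ∈ cycClass α e k) : x ≠ 0 := by
  obtain ⟨j, -, rfl⟩ := mem_image.1 hx
  exact pow_ne_zero _ h0

theorem image_mul_cycClass (n : ℕ) :
    (cycClass α e k).image (α ^ n * ·) = cycClass α e (n + k) := by
  rw [cycClass, cycClass, image_image]
  exact image_congr fun j _ => by simp only [Function.comp_apply]; ring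

theorem sum_cycClass_add {M : Type*} [AddCommMonoid M] (h0 : α ≠ 0) (n : ℕ) (g : F → M) :
    ∑ x ∈ cycClass α e (n + k), g x = ∑ x ∈ cycClass α e k, g (α ^ n * x) := by
  rw [← image_mul_cycClass, sum_image fun x _ y _ h => mul_left_cancel₀ (pow_ne_zero n h0) h]

theorem card_cycClass_eq_card_zero (h0 : α ≠ 0) : #(cycClass α e k) = #(cycClass α e 0) := by
  conv_lhs => rw [← add_zero k, ← image_mul_cycClass]
  exact card_image_of_injective _ (mul_right_injective₀ (pow_ne_zero k h0))

namespace IsPrimitiveElt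

theorem pow_mem_cycClass_iff (hα : IsPrimitiveElt α) (h0 : α ≠ 0) (he : e ∣ Fintype.card F - 1)
    {n : ℕ} : α ^ n ∈ cycClass α e k ↔ n ≡ k [MOD e] := by
  simp only [cycClass, mem_image, mem_range, hα.pow_eq_pow_iff h0]
  constructor
  · rintro ⟨j, -, hj⟩
    simpa [Nat.ModEq] using (hj.of_dvd he).symm
  · intro hn
    have hq : 1 < Fintype.card F := Fintype.one_lt_card
    set N := Fintype.card F - 1
    have hle : k ≤ n + N * k := (Nat.le_mul_of_pos_left k (by lia)).trans (Nat.le_add_left _ _)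
    have hmod : k ≡ n + N * k [MOD e] := by
      simpa using hn.symm.add ((Nat.modEq_zero_iff_dvd.2 (he.mul_right k)).symm)
    obtain ⟨d, hd⟩ := (Nat.modEq_iff_dvd' hle).1 hmod
    refine ⟨d % N, (Nat.mod_lt d (by lia)).trans (by lia), ?_⟩
    calc e * (d % N) + k ≡ e * d + k [MOD N] := ((Nat.mod_modEq d N).mul_left e).add_right k
      _ = n + N * k := by lia
      _ ≡ n [MOD N] := by simp [Nat.ModEq]

theorem exists_pow_of_mem_cycClass (hα : IsPrimitiveElt α) (h0 : α ≠ 0)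
    (he : e ∣ Fintype.card F - 1) {x : F} (hx : x ∈ cycClass α e k) :
    ∃ n, α ^ n = x ∧ n ≡ k [MOD e] := by
  obtain ⟨n, rfl⟩ := hα x (ne_zero_of_mem_cycClass h0 hx)
  exact ⟨n, rfl, (hα.pow_mem_cycClass_iff h0 he).1 hx⟩

theorem cycClass_congr (hα : IsPrimitiveElt α) (h0 : α ≠ 0) (he : e ∣ Fintype.card F - 1)
    (hkl : k ≡ l [MOD e]) : cycClass α e k = cycClass α e l := by
  ext x
  constructor <;> intro hx <;> obtain ⟨n, rfl, hn⟩ := hα.exists_pow_of_mem_cycClass h0 he hx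
  · exact (hα.pow_mem_cycClass_iff h0 he).2 (hn.trans hkl)
  · exact (hα.pow_mem_cycClass_iff h0 he).2 (hn.trans hkl.symm)

theorem disjoint_cycClass (hα : IsPrimitiveElt α) (h0 : α ≠ 0) (he : e ∣ Fintype.card F - 1)
    (hkl : ¬k ≡ l [MOD e]) : Disjoint (cycClass α e k) (cycClass α e l) :=
  disjoint_left.2 fun _ hx hx' => by
    obtain ⟨n, rfl, hn⟩ := hα.exists_pow_of_mem_cycClass h0 he hx
    exact hkl (hn.symm.trans ((hα.pow_mem_cycClass_iff h0 he).1 hx'))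

theorem biUnion_range_cycClass (hα : IsPrimitiveElt α) (h0 : α ≠ 0)
    (he : e ∣ Fintype.card F - 1) : (range e).biUnion (cycClass α e) = univ.erase 0 := by
  ext x
  simp only [mem_biUnion, mem_range, mem_erase, mem_univ, and_true]
  refine ⟨fun ⟨k, _, hk⟩ => ne_zero_of_mem_cycClass h0 hk, fun hx => ?_⟩
  obtain ⟨n, rfl⟩ := hα x hx
  have he0 : 0 < e := Nat.pos_of_dvd_of_pos he (Nat.sub_pos_of_lt Fintype.one_lt_card)
  exact ⟨n % e, Nat.mod_lt n he0, (hα.pow_mem_cycClass_iff h0 he).2 (Nat.mod_modEq n e).symm⟩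

theorem pairwiseDisjoint_range_cycClass (hα : IsPrimitiveElt α) (h0 : α ≠ 0)
    (he : e ∣ Fintype.card F - 1) : (↑(range e) : Set ℕ).PairwiseDisjoint (cycClass α e) :=
  fun _ hk _ hl hkl => hα.disjoint_cycClass h0 he fun h =>
    hkl (h.eq_of_lt_of_lt (mem_range.1 hk) (mem_range.1 hl))

theorem sum_eq_add_sum_cycClass {M : Type*} [AddCommMonoid M] (hα : IsPrimitiveElt α) (h0 : α ≠ 0)
    (he : e ∣ Fintype.card F - 1) (g : F → M) :
    ∑ x, g x = g 0 + ∑ k ∈ range e, ∑ x ∈ cycClass α e k, g x := by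
  rw [← sum_biUnion (hα.pairwiseDisjoint_range_cycClass h0 he), hα.biUnion_range_cycClass h0 he,
    add_sum_erase _ _ (mem_univ 0)]

theorem card_cycClass (hα : IsPrimitiveElt α) (h0 : α ≠ 0) (he : e ∣ Fintype.card F - 1) (k : ℕ) :
    #(cycClass α e k) = (Fintype.card F - 1) / e := by
  have hsum := card_biUnion (hα.pairwiseDisjoint_range_cycClass h0 he)
  simp only [hα.biUnion_range_cycClass h0 he, card_erase_of_mem (mem_univ (0 : F)), card_univ,
    card_cycClass_eq_card_zero h0, sum_const, card_range, smul_eq_mul] at hsum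
  have he0 : 0 < e := Nat.pos_of_dvd_of_pos he (Nat.sub_pos_of_lt Fintype.one_lt_card)
  rw [card_cycClass_eq_card_zero h0, hsum, Nat.mul_div_cancel_left _ he0]

theorem cycClass_union_cycClass_add (hα : IsPrimitiveElt α) (h0 : α ≠ 0)
    (he : 2 * e ∣ Fintype.card F - 1) :
    cycClass α (2 * e) k ∪ cycClass α (2 * e) (k + e) = cycClass α e k := by
  have mod_iff (n : ℕ) : n ≡ k [MOD 2 * e] ∨ n ≡ k + e [MOD 2 * e] ↔ n ≡ k [MOD e] := by
    simp only [Nat.modEq_iff_dvd]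
    push_cast
    constructor
    · rintro (⟨c, hc⟩ | ⟨c, hc⟩)
      · exact ⟨2 * c, by linear_combination hc⟩
      · exact ⟨2 * c - 1, by linear_combination hc⟩
    · rintro ⟨c, hc⟩
      obtain ⟨d, rfl | rfl⟩ := Int.even_or_odd' c
      · exact Or.inl ⟨d, by linear_combination hc⟩
      · exact Or.inr ⟨d + 1, by linear_combination hc⟩
  ext x
  by_cases hx : x = 0
  · have not_mem (d j : ℕ) : x ∉ cycClass α d j := fun h => ne_zero_of_mem_cycClass h0 h hx
    simp only [mem_union, not_mem, or_self]
  · obtain ⟨n, rfl⟩ := hα x hx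
    rw [mem_union, hα.pow_mem_cycClass_iff h0 he, hα.pow_mem_cycClass_iff h0 he,
      hα.pow_mem_cycClass_iff h0 (dvd_of_mul_left_dvd he), mod_iff]

theorem sum_cycClass_eq_add {M : Type*} [AddCommMonoid M] (hα : IsPrimitiveElt α) (h0 : α ≠ 0)
    (he : 2 * e ∣ Fintype.card F - 1) (g : F → M) :
    ∑ x ∈ cycClass α e k, g x =
      ∑ x ∈ cycClass α (2 * e) k, g x + ∑ x ∈ cycClass α (2 * e) (k + e), g x := by
  have he0 : 0 < 2 * e := Nat.pos_of_dvd_of_pos he (Nat.sub_pos_of_lt Fintype.one_lt_card)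
  have hmod : ¬k ≡ k + e [MOD 2 * e] := fun h =>
    Nat.not_dvd_of_pos_of_lt (by lia) (by lia : e < 2 * e)
      (by simpa using (Nat.modEq_iff_dvd' (Nat.le_add_right k e)).1 h)
  rw [← hα.cycClass_union_cycClass_add h0 he, sum_union (hα.disjoint_cycClass h0 he hmod)]

theorem mem_cycClass_zero_iff (hα : IsPrimitiveElt α) (h0 : α ≠ 0) {c : ℕ}
    (hc : Fintype.card F - 1 = e * c) {x : F} (hx : x ≠ 0) :
    x ∈ cycClass α e 0 ↔ x ^ c = 1 := by
  obtain ⟨n, rfl⟩ := hα x hx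
  have hc0 : 0 < c := Nat.pos_of_mul_pos_left (hc ▸ Nat.sub_pos_of_lt Fintype.one_lt_card)
  rw [hα.pow_mem_cycClass_iff h0 ⟨c, hc⟩, ← pow_mul, ← orderOf_dvd_iff_pow_eq_one,
    hα.orderOf_eq h0, hc, Nat.mul_dvd_mul_iff_right hc0, Nat.modEq_zero_iff_dvd]

/-- Multiplication by `α ^ e` fixes `C_0^e` and multiplies the sum by `α ^ (e * n)`. -/
theorem sum_cycClass_zero_pow (hα : IsPrimitiveElt α) (h0 : α ≠ 0) {c : ℕ}
    (hc : Fintype.card F - 1 = e * c) (n : ℕ) :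
    ∑ x ∈ cycClass α e 0, x ^ n = if c ∣ n then (c : F) else 0 := by
  have he0 : 0 < e := Nat.pos_of_mul_pos_right (hc ▸ Nat.sub_pos_of_lt Fintype.one_lt_card)
  have he : e ∣ Fintype.card F - 1 := ⟨c, hc⟩
  split_ifs with hcn
  · have hone : ∀ x ∈ cycClass α e 0, x ^ n = 1 := fun x hx => by
      obtain ⟨d, rfl⟩ := hcn
      rw [pow_mul, (hα.mem_cycClass_zero_iff h0 hc (ne_zero_of_mem_cycClass h0 hx)).1 hx, one_pow]
    rw [sum_congr rfl hone, sum_const, hα.card_cycClass h0 he, hc, Nat.mul_div_cancel_left c he0,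
      nsmul_one]
  · have hne : (α ^ e) ^ n ≠ 1 := fun h => by
      rw [← pow_mul, ← orderOf_dvd_iff_pow_eq_one, hα.orderOf_eq h0, hc,
        Nat.mul_dvd_mul_iff_left he0] at h
      exact hcn h
    have hclass : cycClass α e (e + 0) = cycClass α e 0 :=
      hα.cycClass_congr h0 he (Nat.add_modEq_left (n := e))
    have hinv : (α ^ e) ^ n * ∑ x ∈ cycClass α e 0, x ^ n = ∑ x ∈ cycClass α e 0, x ^ n := by
      conv_rhs => rw [← hclass, sum_cycClass_add h0]
      simp only [mul_pow, mul_sum]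
    exact (mul_left_eq_self₀.1 hinv).resolve_left hne

end IsPrimitiveElt

end Classes

section MultiplicativeCharacters

theorem IsPrimitiveElt.isPrimitiveRoot_apply {F R : Type*} [Field F] [CommMonoidWithZero R] {α : F}
    (hα : IsPrimitiveElt α) (h0 : α ≠ 0) (χ : MulChar F R) :
    IsPrimitiveRoot (χ α) (orderOf χ) := by
  rw [IsPrimitiveRoot.iff_orderOf, orderOf_eq_orderOf_iff]
  intro n
  rw [MulChar.eq_one_iff]
  refine ⟨fun h u => ?_, fun h => ?_⟩
  · obtain ⟨m, hm⟩ := hα u u.ne_zero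
    rw [MulChar.pow_apply_coe, ← hm, map_pow, ← pow_mul, mul_comm, pow_mul, h, one_pow]
  · rw [← h (Units.mk0 α h0), MulChar.pow_apply_coe, Units.val_mk0]

theorem IsPrimitiveElt.mulChar_apply_pow_eq_neg_one {F R : Type*} [Field F] [CommRing R]
    [IsDomain R] {α : F} (hα : IsPrimitiveElt α) (h0 : α ≠ 0) {χ : MulChar F R} {n : ℕ} (hn : n ≠ 0)
    (hχ : orderOf χ = n * 2) : χ α ^ n = -1 :=
  ((hχ ▸ hα.isPrimitiveRoot_apply h0 χ).pow (by lia) rfl).eq_neg_one_of_two_right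

variable {F R : Type*} [Field F] [Fintype F] [DecidableEq F]

theorem mulChar_apply_of_mem_cycClass [CommMonoidWithZero R] {α : F} {e k : ℕ} (h0 : α ≠ 0)
    {χ : MulChar F R} (hχ : χ ^ e = 1) {x : F} (hx : x ∈ cycClass α e k) : χ x = χ α ^ k := by
  obtain ⟨j, -, rfl⟩ := mem_image.1 hx
  have hαe : χ α ^ e = 1 := by
    rw [← Units.val_mk0 h0, ← MulChar.pow_apply_coe, hχ, MulChar.one_apply_coe]
  rw [map_pow, pow_add, pow_mul, hαe, one_pow, one_mul]

/-- The quadratic character of `F` with values in `R`. -/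
def quadraticMulChar (F R : Type*) [Field F] [Fintype F] [DecidableEq F] [CommRing R] :
    MulChar F R :=
  (quadraticChar F).ringHomComp (Int.castRingHom R)

variable [CommRing R]

theorem eq_quadraticMulChar [IsDomain R] {χ : MulChar F R} (h : orderOf χ = 2) :
    χ = quadraticMulChar F R := by
  have hsq (u : Fˣ) : χ u ^ 2 = 1 := by
    rw [← MulChar.pow_apply_coe, ← h, pow_orderOf_eq_one, MulChar.one_apply_coe]
  have apply_of_isSquare {u : Fˣ} (hu : quadraticChar F u = 1) : χ u = 1 := by
    obtain ⟨y, hy⟩ := (quadraticChar_one_iff_isSquare u.ne_zero).1 hu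
    have hy0 : y ≠ 0 := left_ne_zero_of_mul (hy ▸ u.ne_zero)
    rw [hy, ← sq, map_pow, ← Units.val_mk0 hy0, hsq]
  have hne : χ ≠ 1 := fun h1 => by simp [h1] at h
  obtain ⟨z, hz⟩ := MulChar.ne_one_iff.1 hne
  have hzneg : quadraticChar F z = -1 :=
    (quadraticChar_dichotomy z.ne_zero).resolve_left (mt apply_of_isSquare hz)
  ext u
  rw [quadraticMulChar, MulChar.ringHomComp_apply]
  rcases quadraticChar_dichotomy u.ne_zero with hu | hu
  · rw [hu, map_one, apply_of_isSquare hu]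
  · have huz : χ u * χ z = 1 := by
      rw [← map_mul, ← Units.val_mul]
      exact apply_of_isSquare (by rw [Units.val_mul, map_mul, hu, hzneg]; norm_num)
    rw [(sq_eq_one_iff.1 (hsq z)).resolve_left hz] at huz
    rw [hu, map_neg, map_one]
    linear_combination -huz

theorem sum_comp_sq (hF : ringChar F ≠ 2) (g : F → R) :
    ∑ x, g (x ^ 2) = ∑ y, (1 + quadraticMulChar F R y) * g y := by
  rw [← sum_fiberwise univ (fun x : F => x ^ 2)]
  refine sum_congr rfl fun y _ => ?_
  have hcard : (#{x : F | x ^ 2 = y} : ℤ) = quadraticChar F y + 1 := by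
    rw [← quadraticChar_card_sqrts hF]
    simp
  calc ∑ x with x ^ 2 = y, g (x ^ 2) = ∑ x with x ^ 2 = y, g y :=
        sum_congr rfl fun x hx => by rw [(mem_filter.1 hx).2]
    _ = ((#{x : F | x ^ 2 = y} : ℤ) : R) * g y := by rw [sum_const, nsmul_eq_mul, Int.cast_natCast]
    _ = (1 + quadraticMulChar F R y) * g y := by
        rw [hcard, add_comm, Int.cast_add, Int.cast_one]; rfl

end MultiplicativeCharacters

section JacobiSums

variable {F R : Type*} [Field F] [Fintype F] [CommRing R]

/-- Completing the square, `4 x (1 - x) = 1 - (2 x - 1) ^ 2`, turns the left-hand side into a sum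
over squares. -/
theorem apply_four_mul_jacobiSum_self [DecidableEq F] [IsDomain R] (hF : ringChar F ≠ 2)
    {χ : MulChar F R} (hχ : χ ≠ 1) :
    χ 4 * jacobiSum χ χ = jacobiSum (quadraticMulChar F R) χ := by
  have h2 : (2 : F) ≠ 0 := Ring.two_ne_zero hF
  have hbij : Function.Bijective fun x : F => 2 * x - 1 :=
    (Equiv.subRight (1 : F)).bijective.comp (mulLeft_bijective₀ 2 h2)
  have hsum : ∑ x : F, χ (1 - x) = 0 := by
    rw [← MulChar.sum_eq_zero_of_ne_one hχ]
    exact Fintype.sum_equiv (Equiv.subLeft 1) _ _ fun _ => rfl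
  calc χ 4 * jacobiSum χ χ = ∑ x : F, χ (1 - (2 * x - 1) ^ 2) := by
        rw [jacobiSum, mul_sum]
        refine sum_congr rfl fun x _ => ?_
        rw [← map_mul, ← map_mul]
        congr 1
        ring
    _ = ∑ x : F, χ (1 - x ^ 2) := hbij.sum_comp fun x => χ (1 - x ^ 2)
    _ = ∑ y : F, (1 + quadraticMulChar F R y) * χ (1 - y) := sum_comp_sq hF fun y => χ (1 - y)
    _ = jacobiSum (quadraticMulChar F R) χ := by
        simp only [add_mul, one_mul, sum_add_distrib, hsum, zero_add, jacobiSum]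

/-- The substitution is the involution `x ↦ x / (x - 1)` of `F \ {1}`. -/
theorem jacobiSum_eq_of_mul_mul_eq_one {χ φ ψ : MulChar F R} (h : χ * φ * ψ = 1) :
    jacobiSum χ φ = χ (-1) * jacobiSum χ ψ := by
  classical
  have hψ : ψ = (χ * φ)⁻¹ := (inv_eq_of_mul_eq_one_right h).symm
  have sum_erase_one (μ : MulChar F R) :
      jacobiSum χ μ = ∑ x ∈ univ.erase 1, χ x * μ (1 - x) := by
    rw [jacobiSum, sum_erase univ (by rw [sub_self, MulChar.map_zero, mul_zero])]
  have hmem {x : F} (hx : x ∈ univ.erase 1) : x - 1 ≠ 0 := sub_ne_zero.2 (ne_of_mem_erase hx)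
  have hinvol {x : F} (hx : x ∈ univ.erase 1) : x / (x - 1) - 1 = (x - 1)⁻¹ := by
    have := hmem hx
    field_simp
    ring
  have hmaps : ∀ x ∈ univ.erase (1 : F), x / (x - 1) ∈ univ.erase (1 : F) := fun x hx => by
    rw [mem_erase, ← sub_ne_zero, hinvol hx]
    exact ⟨inv_ne_zero (hmem hx), mem_univ _⟩
  have hleft : ∀ x ∈ univ.erase (1 : F), x / (x - 1) / (x / (x - 1) - 1) = x := fun x hx => by
    rw [hinvol hx, div_inv_eq_mul, div_mul_cancel₀ x (hmem hx)]
  rw [sum_erase_one, sum_erase_one, mul_sum]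
  refine sum_nbij' (fun x => x / (x - 1)) (fun x => x / (x - 1)) hmaps hmaps hleft hleft
    fun x hx => ?_
  have hx1 := hmem hx
  have hinv : (1 - x / (x - 1))⁻¹ = 1 - x := by
    rw [← neg_sub, hinvol hx]
    simp
  have hmul : -1 * (x / (x - 1)) * (1 - x) = x := by
    field_simp
    ring
  calc χ x * φ (1 - x) = χ (-1 * (x / (x - 1)) * (1 - x)) * φ (1 - x) := by rw [hmul]
    _ = χ (-1) * (χ (x / (x - 1)) * ψ (1 - x / (x - 1))) := by
        rw [hψ, MulChar.inv_apply', hinv, MulChar.mul_apply, map_mul, map_mul]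
        ring

theorem jacobiSum_mul_jacobiSum_mul [IsDomain R] (hF : (Fintype.card F : R) ≠ 0)
    {ψ : AddChar F R} (hψ : ψ.IsPrimitive) {χ₁ χ₂ χ₃ : MulChar F R} (h₁₂ : χ₁ * χ₂ ≠ 1)
    (h₂₃ : χ₂ * χ₃ ≠ 1) (h : χ₁ * χ₂ * χ₃ ≠ 1) :
    jacobiSum χ₁ χ₂ * jacobiSum (χ₁ * χ₂) χ₃ = jacobiSum χ₂ χ₃ * jacobiSum χ₁ (χ₂ * χ₃) := by
  have hg₁₂ := jacobiSum_mul_nontrivial h₁₂ ψ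
  have hg₂₃ := jacobiSum_mul_nontrivial h₂₃ ψ
  have hgl := jacobiSum_mul_nontrivial h ψ
  have hgr := jacobiSum_mul_nontrivial (mul_assoc χ₁ χ₂ χ₃ ▸ h) ψ
  have hne₁₂ := gaussSum_ne_zero_of_nontrivial hF h₁₂ hψ
  have hne₂₃ := gaussSum_ne_zero_of_nontrivial hF h₂₃ hψ
  have hne := gaussSum_ne_zero_of_nontrivial hF h hψ
  rw [← mul_assoc χ₁] at hgr
  refine mul_left_cancel₀ (mul_ne_zero hne (mul_ne_zero hne₁₂ hne₂₃)) ?_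
  calc _ = gaussSum (χ₂ * χ₃) ψ * (gaussSum (χ₁ * χ₂) ψ * jacobiSum χ₁ χ₂) *
          (gaussSum (χ₁ * χ₂ * χ₃) ψ * jacobiSum (χ₁ * χ₂) χ₃) := by ring
    _ = gaussSum (χ₁ * χ₂) ψ * (gaussSum (χ₂ * χ₃) ψ * jacobiSum χ₂ χ₃) *
          (gaussSum (χ₁ * χ₂ * χ₃) ψ * jacobiSum χ₁ (χ₂ * χ₃)) := by
        rw [hg₁₂, hg₂₃, hgl, hgr]
        ring
    _ = _ := by ring

end JacobiSums

section ClassSums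

variable {F R : Type*} [Field F] [Fintype F] [DecidableEq F] [CommRing R] {α : F} {e k : ℕ}

/-- The part `∑_{x ∈ C_k^e} φ (1 - x)` of a Jacobi sum that comes from the cyclotomic class `C_k^e`.
It links Jacobi sums to the counting of differences between cyclotomic classes. -/
def classSum (α : F) (e : ℕ) (φ : MulChar F R) (k : ℕ) : R :=
  ∑ x ∈ cycClass α e k, φ (1 - x)

theorem classSum_ringHomComp {R' : Type*} [CommRing R'] (φ : MulChar F R) (f : R →+* R') :
    classSum α e (φ.ringHomComp f) k = f (classSum α e φ k) := by
  simp only [classSum, map_sum, MulChar.ringHomComp_apply]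

theorem classSum_quadraticMulChar :
    classSum α e (quadraticMulChar F R) k = (classSum α e (quadraticChar F) k : ℤ) :=
  classSum_ringHomComp _ _

namespace IsPrimitiveElt

theorem classSum_eq_add (hα : IsPrimitiveElt α) (h0 : α ≠ 0) (he : 2 * e ∣ Fintype.card F - 1)
    (φ : MulChar F R) (k : ℕ) :
    classSum α e φ k = classSum α (2 * e) φ k + classSum α (2 * e) φ (k + e) :=
  hα.sum_cycClass_eq_add h0 he fun x => φ (1 - x)

theorem jacobiSum_eq_sum_classSum [Nontrivial R] (hα : IsPrimitiveElt α) (h0 : α ≠ 0)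
    (he : e ∣ Fintype.card F - 1) {χ : MulChar F R} (hχ : χ ^ e = 1) (φ : MulChar F R) :
    jacobiSum χ φ = ∑ k ∈ range e, χ α ^ k * classSum α e φ k := by
  rw [jacobiSum, hα.sum_eq_add_sum_cycClass h0 he, MulChar.map_zero, zero_mul, zero_add]
  refine sum_congr rfl fun k _ => ?_
  rw [classSum, mul_sum]
  exact sum_congr rfl fun x hx => by rw [mulChar_apply_of_mem_cycClass h0 hχ hx]

end IsPrimitiveElt

theorem sum_range_pow_pow_eq_ite [IsDomain R] {ζ : R} (hζ : IsPrimitiveRoot ζ e) (n : ℕ) :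
    ∑ u ∈ range e, (ζ ^ n) ^ u = if e ∣ n then (e : R) else 0 := by
  split_ifs with hn
  · simp [(hζ.pow_eq_one_iff_dvd n).2 hn]
  · have hne : ζ ^ n - 1 ≠ 0 := sub_ne_zero.2 fun h => hn ((hζ.pow_eq_one_iff_dvd n).1 h)
    refine (mul_eq_zero.1 ?_).resolve_left hne
    rw [mul_geom_sum, ← pow_mul, mul_comm, pow_mul, hζ.pow_eq_one, one_pow, sub_self]

theorem IsPrimitiveElt.sum_mul_jacobiSum_pow [IsDomain R] (hα : IsPrimitiveElt α) (h0 : α ≠ 0)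
    (he : e ∣ Fintype.card F - 1) {χ : MulChar F R} (hχ : orderOf χ = e) (φ : MulChar F R) {l : ℕ}
    (hk : k < e) (hkl : e ∣ k + l) :
    ∑ u ∈ range e, (χ α ^ l) ^ u * jacobiSum (χ ^ u) φ = e * classSum α e φ k := by
  have hζ : IsPrimitiveRoot (χ α) e := hχ ▸ hα.isPrimitiveRoot_apply h0 χ
  have expand (u : ℕ) : (χ α ^ l) ^ u * jacobiSum (χ ^ u) φ =
      ∑ j ∈ range e, (χ α ^ (j + l)) ^ u * classSum α e φ j := by
    have hu : (χ ^ u) ^ e = 1 := by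
      rw [← pow_mul, mul_comm, pow_mul, ← hχ, pow_orderOf_eq_one, one_pow]
    rw [hα.jacobiSum_eq_sum_classSum h0 he hu, mul_sum]
    refine sum_congr rfl fun j _ => ?_
    rw [← Units.val_mk0 h0, MulChar.pow_apply_coe]
    ring
  have eq_k {j : ℕ} (hj : j ∈ range e) : e ∣ j + l ↔ j = k := by
    refine ⟨fun h => ?_, fun h => h ▸ hkl⟩
    refine Nat.ModEq.eq_of_lt_of_lt (m := e) (Nat.ModEq.add_right_cancel' l ?_) (mem_range.1 hj) hk
    exact (Nat.modEq_zero_iff_dvd.2 h).trans (Nat.modEq_zero_iff_dvd.2 hkl).symm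
  calc ∑ u ∈ range e, (χ α ^ l) ^ u * jacobiSum (χ ^ u) φ
      = ∑ j ∈ range e, (∑ u ∈ range e, (χ α ^ (j + l)) ^ u) * classSum α e φ j := by
        simp only [expand, sum_mul]
        exact sum_comm
    _ = ∑ j ∈ range e, if j = k then e * classSum α e φ j else 0 :=
        sum_congr rfl fun j hj => by
          rw [sum_range_pow_pow_eq_ite hζ, ite_mul, zero_mul, if_congr (eq_k hj) rfl rfl]
    _ = e * classSum α e φ k := by rw [sum_ite_eq', if_pos (mem_range.2 hk)]

end ClassSums

section QuarticRepresentation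

variable {F : Type*} [Field F] [Fintype F]

theorem ringChar_ne_two_of_even_card_sub_one (h2 : 2 ∣ Fintype.card F - 1) : ringChar F ≠ 2 :=
  fun h => by
    have heven := FiniteField.even_card_of_char_two h
    have hq : 1 < Fintype.card F := Fintype.one_lt_card
    lia

theorem ringChar_complex_ne (F : Type*) [Field F] [Finite F] : ringChar ℂ ≠ ringChar F := by
  rw [ringChar.eq_zero]
  exact (CharP.ringChar_ne_zero_of_finite F).symm

variable [DecidableEq F] {α : F}

theorem orderOf_quadraticChar (hF : ringChar F ≠ 2) : orderOf (quadraticChar F) = 2 :=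
  orderOf_eq_prime (quadraticChar_isQuadratic F).sq_eq_one (quadraticChar_ne_one hF)

theorem quadraticChar_neg_one_eq_one (h4 : 4 ∣ Fintype.card F - 1) : quadraticChar F (-1) = 1 := by
  refine (quadraticChar_one_iff_isSquare (neg_ne_zero.2 one_ne_zero)).2 ?_
  exact FiniteField.isSquare_neg_one_iff.2 (by lia)

theorem inv_quadraticMulChar {R : Type*} [CommRing R] :
    (quadraticMulChar F R)⁻¹ = quadraticMulChar F R :=
  ((quadraticChar_isQuadratic F).comp _).inv

namespace IsPrimitiveElt

theorem quadraticChar_apply (hα : IsPrimitiveElt α) (h0 : α ≠ 0) (hF : ringChar F ≠ 2) :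
    quadraticChar F α = -1 :=
  pow_one (quadraticChar F α) ▸
    hα.mulChar_apply_pow_eq_neg_one h0 one_ne_zero (orderOf_quadraticChar hF)

theorem classSum_quadraticChar_three (hα : IsPrimitiveElt α) (h0 : α ≠ 0)
    (h4 : 4 ∣ Fintype.card F - 1) :
    classSum α 4 (quadraticChar F) 3 = -classSum α 4 (quadraticChar F) 1 := by
  have hF : ringChar F ≠ 2 := ringChar_ne_two_of_even_card_sub_one (by lia)
  have hne := quadraticChar_ne_one hF
  have hpow : quadraticChar F ^ 4 = 1 := (quadraticChar_isQuadratic F).pow_even (by decide)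
  have hone := jacobiSum_one_nontrivial hne
  have hself := jacobiSum_nontrivial_inv hne
  rw [hα.jacobiSum_eq_sum_classSum h0 h4 (one_pow 4), MulChar.one_apply h0.isUnit] at hone
  rw [(quadraticChar_isQuadratic F).inv, quadraticChar_neg_one_eq_one h4,
    hα.jacobiSum_eq_sum_classSum h0 h4 hpow, hα.quadraticChar_apply h0 hF] at hself
  simp only [sum_range_succ, range_zero, sum_empty] at hone hself
  linarith

theorem jacobiSum_quadraticMulChar_of_sq_eq_neg_one {R : Type*} [CommRing R] [Nontrivial R]
    (hα : IsPrimitiveElt α) (h0 : α ≠ 0) (h4 : 4 ∣ Fintype.card F - 1) {χ : MulChar F R}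
    (hχ : χ ^ 4 = 1) (hχα : χ α ^ 2 = -1) :
    jacobiSum χ (quadraticMulChar F R) =
      (classSum α 4 (quadraticChar F) 0 - classSum α 4 (quadraticChar F) 2 : ℤ) +
        2 * χ α * (classSum α 4 (quadraticChar F) 1 : ℤ) := by
  rw [hα.jacobiSum_eq_sum_classSum h0 h4 hχ]
  simp only [sum_range_succ, range_zero, sum_empty, classSum_quadraticMulChar,
    hα.classSum_quadraticChar_three h0 h4]
  push_cast
  linear_combination ((classSum α 4 (quadraticChar F) 2 : ℤ) -
    χ α * (classSum α 4 (quadraticChar F) 1 : ℤ) : R) * hχα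

theorem card_eq_sq_add_four_mul_sq (hα : IsPrimitiveElt α) (h0 : α ≠ 0)
    (h4 : 4 ∣ Fintype.card F - 1) :
    (Fintype.card F : ℤ) =
      (classSum α 4 (quadraticChar F) 0 - classSum α 4 (quadraticChar F) 2) ^ 2 +
        4 * classSum α 4 (quadraticChar F) 1 ^ 2 := by
  obtain ⟨ρ, hρ⟩ := MulChar.exists_mulChar_orderOf F h4 (Complex.isPrimitiveRoot_exp 4 (by simp))
  have pow_ne_one {u : ℕ} (hu : ¬4 ∣ u) : ρ ^ u ≠ 1 := fun h =>
    hu (hρ ▸ orderOf_dvd_of_pow_eq_one h)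
  have hρ4 : ρ ^ 4 = 1 := hρ ▸ pow_orderOf_eq_one ρ
  have hη : ρ ^ 2 = quadraticMulChar F ℂ :=
    eq_quadraticMulChar (by rw [orderOf_pow, hρ]; norm_num)
  have hi : ρ α ^ 2 = -1 :=
    hα.mulChar_apply_pow_eq_neg_one h0 two_ne_zero hρ
  have hinv : ρ⁻¹ α = -ρ α := by
    rw [MulChar.inv_apply_eq_inv']
    exact inv_eq_of_mul_eq_one_right (by linear_combination -hi)
  have hnorm := jacobiSum_mul_jacobiSum_inv (ringChar_complex_ne F)
    (by simpa using pow_ne_one (u := 1) (by norm_num))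
    (hη ▸ pow_ne_one (by norm_num)) (hη ▸ pow_succ' ρ 2 ▸ pow_ne_one (by norm_num))
  rw [inv_quadraticMulChar, hα.jacobiSum_quadraticMulChar_of_sq_eq_neg_one h0 h4 hρ4 hi,
    hα.jacobiSum_quadraticMulChar_of_sq_eq_neg_one h0 h4 (by rw [inv_pow, hρ4, inv_one])
      (by rw [hinv, neg_sq, hi]), hinv] at hnorm
  have hcast : (Fintype.card F : ℂ) =
      ((classSum α 4 (quadraticChar F) 0 - classSum α 4 (quadraticChar F) 2 : ℤ) : ℂ) ^ 2 +
        4 * ((classSum α 4 (quadraticChar F) 1 : ℤ) : ℂ) ^ 2 := by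
    linear_combination -hnorm - 4 * ((classSum α 4 (quadraticChar F) 1 : ℤ) : ℂ) ^ 2 * hi
  exact_mod_cast hcast

end IsPrimitiveElt

end QuarticRepresentation

section OcticJacobiSums

variable {F : Type*} [Field F] [Fintype F]

theorem jacobiSum_pow_pow_eq_of_dvd {R : Type*} [CommRing R] {χ : MulChar F R} {n u v w : ℕ}
    (hχ : χ ^ n = 1) (hneg : χ (-1) = 1) (h : n ∣ u + v + w) :
    jacobiSum (χ ^ u) (χ ^ v) = jacobiSum (χ ^ u) (χ ^ w) := by
  have hmul : χ ^ u * χ ^ v * χ ^ w = 1 := by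
    obtain ⟨c, hc⟩ := h
    rw [← pow_add, ← pow_add, hc, pow_mul, hχ, one_pow]
  have hneg_pow : (χ ^ u) (-1) = 1 := by
    rw [← Units.val_one, ← Units.val_neg, MulChar.pow_apply_coe, Units.val_neg, Units.val_one, hneg,
      one_pow]
  rw [jacobiSum_eq_of_mul_mul_eq_one hmul, hneg_pow, one_mul]

theorem jacobiSum_ne_zero {K : Type*} [Field K] (hF : (Fintype.card F : K) ≠ 0)
    {χ φ : MulChar F K} (hχ : χ ≠ 1) (hφ : φ ≠ 1) (hχφ : χ * φ ≠ 1) : jacobiSum χ φ ≠ 0 := by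
  have hchar : ringChar K ≠ ringChar F := fun h =>
    hF ((ringChar.spec K _).2 (h ▸ (ringChar.spec F _).1 (Nat.cast_card_eq_zero F)))
  exact left_ne_zero_of_mul (jacobiSum_mul_jacobiSum_inv hchar hχ hφ hχφ ▸ hF)

theorem pow_ne_one_of_orderOf_eq {G : Type*} [Monoid G] {x : G} {n u : ℕ} (hx : orderOf x = n)
    (hu : ¬n ∣ u) : x ^ u ≠ 1 :=
  fun h => hu (hx ▸ orderOf_dvd_of_pow_eq_one h)

variable {R : Type*} [CommRing R] [IsDomain R] {θ : MulChar F R}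

theorem pow_four_eq_quadraticMulChar [DecidableEq F] (hθ : orderOf θ = 8) :
    θ ^ 4 = quadraticMulChar F R :=
  eq_quadraticMulChar (by rw [orderOf_pow, hθ]; norm_num)

theorem jacobiSum_pow_self_of_odd (hF : ringChar F ≠ 2) (hθ : orderOf θ = 8) (h4 : θ 4 = -1)
    {u : ℕ} (hu : Odd u) : jacobiSum (θ ^ u) (θ ^ u) = -jacobiSum (θ ^ u) (θ ^ 4) := by
  classical
  have hne : θ ^ u ≠ 1 := pow_ne_one_of_orderOf_eq hθ fun h =>
    hu.not_two_dvd_nat (dvd_trans (by norm_num) h)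
  have hdup := apply_four_mul_jacobiSum_self hF hne
  rw [MulChar.pow_apply' θ hu.pos.ne', h4, hu.neg_one_pow, ← pow_four_eq_quadraticMulChar hθ,
    jacobiSum_comm (θ ^ 4)] at hdup
  linear_combination -hdup

theorem jacobiSum_pow_three_pow_four {R : Type*} [CommRing R] {χ : MulChar F R} (hχ : χ ^ 8 = 1)
    (hneg : χ (-1) = 1) : jacobiSum (χ ^ 3) (χ ^ 4) = jacobiSum χ (χ ^ 4) :=
  calc jacobiSum (χ ^ 3) (χ ^ 4) = jacobiSum (χ ^ 3) (χ ^ 1) :=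
        jacobiSum_pow_pow_eq_of_dvd hχ hneg (by norm_num)
    _ = jacobiSum (χ ^ 1) (χ ^ 3) := jacobiSum_comm _ _
    _ = jacobiSum (χ ^ 1) (χ ^ 4) := jacobiSum_pow_pow_eq_of_dvd hχ hneg (by norm_num)
    _ = jacobiSum χ (χ ^ 4) := by rw [pow_one]

theorem jacobiSum_pow_five {θ : MulChar F ℂ} (hF : ringChar F ≠ 2) (hθ : orderOf θ = 8)
    (hneg : θ (-1) = 1) (h4 : θ 4 = -1) :
    jacobiSum (θ ^ 1) (θ ^ 5) = -jacobiSum (θ ^ 2) (θ ^ 2) := by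
  have hθ8 : θ ^ 8 = 1 := hθ ▸ pow_orderOf_eq_one θ
  have ne_one {u : ℕ} (hu : ¬8 ∣ u) : θ ^ u ≠ 1 := pow_ne_one_of_orderOf_eq hθ hu
  have hcard : (Fintype.card F : ℂ) ≠ 0 := Nat.cast_ne_zero.2 Fintype.card_ne_zero
  have hL : jacobiSum (θ ^ 1) (θ ^ 4) ≠ 0 :=
    jacobiSum_ne_zero hcard (ne_one (by norm_num)) (ne_one (by norm_num))
      (by rw [← pow_add]; exact ne_one (by norm_num))
  have hcocycle := jacobiSum_mul_jacobiSum_mul hcard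
    (AddChar.FiniteField.primitiveChar_to_Complex_isPrimitive F) (χ₁ := θ ^ 1) (χ₂ := θ ^ 1)
    (χ₃ := θ ^ 4) (by rw [← pow_add]; exact ne_one (by norm_num))
    (by rw [← pow_add]; exact ne_one (by norm_num))
    (by rw [← pow_add, ← pow_add]; exact ne_one (by norm_num))
  have h24 : jacobiSum (θ ^ 2) (θ ^ 4) = jacobiSum (θ ^ 2) (θ ^ 2) :=
    jacobiSum_pow_pow_eq_of_dvd hθ8 hneg (by norm_num)
  rw [← pow_add, ← pow_add, one_add_one_eq_two, show 1 + 4 = 5 from rfl, h24,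
    jacobiSum_pow_self_of_odd hF hθ h4 odd_one] at hcocycle
  exact mul_left_cancel₀ hL (by linear_combination -hcocycle)

theorem sum_mul_jacobiSum_pow_sq {θ : MulChar F ℂ} (hF : ringChar F ≠ 2) (hθ : orderOf θ = 8)
    (hneg : θ (-1) = 1) (h4 : θ 4 = -1) (w : ℂ) :
    ∑ u ∈ range 8, w ^ u * jacobiSum (θ ^ u) (θ ^ 2) =
      (w ^ 2 + w ^ 4 - w - w ^ 5) * jacobiSum (θ ^ 2) (θ ^ 2) -
        w ^ 3 * jacobiSum θ (θ ^ 4) - w ^ 7 * jacobiSum (θ ^ 7) (θ ^ 4) - w ^ 6 - 1 := by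
  have hθ8 : θ ^ 8 = 1 := hθ ▸ pow_orderOf_eq_one θ
  have symm {u v : ℕ} (w : ℕ) (h : 8 ∣ u + v + w) := jacobiSum_pow_pow_eq_of_dvd hθ8 hneg h
  have ne_one {u : ℕ} (hu : ¬8 ∣ u) : θ ^ u ≠ 1 := pow_ne_one_of_orderOf_eq hθ hu
  have h15 := jacobiSum_pow_five hF hθ hneg h4
  have h02 : jacobiSum (θ ^ 0) (θ ^ 2) = -1 := by
    rw [pow_zero, jacobiSum_one_nontrivial (ne_one (by norm_num))]
  have h12 : jacobiSum (θ ^ 1) (θ ^ 2) = -jacobiSum (θ ^ 2) (θ ^ 2) := by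
    rw [symm 5 (by norm_num), h15]
  have h32 : jacobiSum (θ ^ 3) (θ ^ 2) = -jacobiSum θ (θ ^ 4) := by
    rw [symm 3 (by norm_num), jacobiSum_pow_self_of_odd hF hθ h4 (by decide),
      jacobiSum_pow_three_pow_four hθ8 hneg]
  have h42 : jacobiSum (θ ^ 4) (θ ^ 2) = jacobiSum (θ ^ 2) (θ ^ 2) := by
    rw [jacobiSum_comm, symm 2 (by norm_num)]
  have h52 : jacobiSum (θ ^ 5) (θ ^ 2) = -jacobiSum (θ ^ 2) (θ ^ 2) := by
    rw [symm 1 (by norm_num), jacobiSum_comm, h15]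
  have h62 : jacobiSum (θ ^ 6) (θ ^ 2) = -1 := by
    have hinv : θ ^ 6 = (θ ^ 2)⁻¹ := eq_inv_of_mul_eq_one_left (by rw [← pow_add, hθ8])
    rw [hinv, jacobiSum_comm, jacobiSum_nontrivial_inv (ne_one (by norm_num)),
      MulChar.pow_apply' θ two_ne_zero, hneg, one_pow]
  have h72 : jacobiSum (θ ^ 7) (θ ^ 2) = -jacobiSum (θ ^ 7) (θ ^ 4) := by
    rw [symm 7 (by norm_num), jacobiSum_pow_self_of_odd hF hθ h4 (by decide)]
  simp only [sum_range_succ, range_zero, sum_empty, h02, h12, h32, h42, h52, h62, h72]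
  ring

variable [DecidableEq F] {α : F}

/-- The rational part `A` of the Jacobi sum `J(θ, η) = A + B √-2` of a character `θ` of order eight
and the quadratic character `η`, written as a difference of class sums. -/
def octicJacobiRe (α : F) : ℤ :=
  classSum α 8 (quadraticChar F) 0 - classSum α 8 (quadraticChar F) 4

/-- Twice the coefficient `B` of the Jacobi sum `J(θ, η) = A + B √-2` of a character `θ` of order
eight and the quadratic character `η`, where `√-2 = θ α + θ α ^ 3`. -/
def octicJacobiIm (α : F) : ℤ :=
  classSum α 8 (quadraticChar F) 1 - classSum α 8 (quadraticChar F) 5 +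
    (classSum α 8 (quadraticChar F) 3 - classSum α 8 (quadraticChar F) 7)

namespace IsPrimitiveElt

theorem two_mul_jacobiSum_pow_four (hα : IsPrimitiveElt α) (h0 : α ≠ 0)
    (h8 : 8 ∣ Fintype.card F - 1) (hθ : orderOf θ = 8) (hneg : θ (-1) = 1) :
    2 * jacobiSum θ (θ ^ 4) = 2 * octicJacobiRe α + (θ α + θ α ^ 3) * octicJacobiIm α := by
  have hθ8 : θ ^ 8 = 1 := hθ ▸ pow_orderOf_eq_one θ
  have hζ : θ α ^ 4 = -1 := hα.mulChar_apply_pow_eq_neg_one h0 four_ne_zero hθ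
  let S (k : ℕ) : ℤ := classSum α 8 (quadraticChar F) k
  have expand {χ : MulChar F R} (hχ : χ ^ 8 = 1) (hχα : χ α ^ 4 = -1) :
      jacobiSum χ (θ ^ 4) = (S 0 - S 4) + χ α * (S 1 - S 5) + χ α ^ 2 * (S 2 - S 6) +
        χ α ^ 3 * (S 3 - S 7) := by
    simp only [pow_four_eq_quadraticMulChar hθ, hα.jacobiSum_eq_sum_classSum h0 h8 hχ,
      classSum_quadraticMulChar, sum_range_succ, range_zero, sum_empty, S]
    linear_combination ((S 4 : R) + χ α * S 5 + χ α ^ 2 * S 6 + χ α ^ 3 * S 7) * hχα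
  have hζ3 : (θ ^ 3) α = θ α ^ 3 := MulChar.pow_apply' θ three_ne_zero α
  have hθ3 : jacobiSum θ (θ ^ 4) = (S 0 - S 4) + θ α ^ 3 * (S 1 - S 5) - θ α ^ 2 * (S 2 - S 6) +
      θ α * (S 3 - S 7) := by
    rw [← jacobiSum_pow_three_pow_four hθ8 hneg,
      expand (by rw [← pow_mul, mul_comm, pow_mul, hθ8, one_pow])
        (by rw [hζ3, ← pow_mul, mul_comm, pow_mul, hζ]; norm_num), hζ3]
    linear_combination (θ α ^ 2 * (S 2 - S 6) + (θ α ^ 5 - θ α) * (S 3 - S 7) : R) * hζ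
  calc 2 * jacobiSum θ (θ ^ 4) = jacobiSum θ (θ ^ 4) + jacobiSum θ (θ ^ 4) := two_mul _
    _ = 2 * (S 0 - S 4 : ℤ) + (θ α + θ α ^ 3) * (S 1 - S 5 + (S 3 - S 7) : ℤ) := by
        nth_rw 1 [expand hθ8 hζ, hθ3]
        push_cast
        ring

theorem two_mul_jacobiSum_pow_seven_pow_four (hα : IsPrimitiveElt α) (h0 : α ≠ 0)
    (h8 : 8 ∣ Fintype.card F - 1) (hθ : orderOf θ = 8) (hneg : θ (-1) = 1) :
    2 * jacobiSum (θ ^ 7) (θ ^ 4) =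
      2 * octicJacobiRe α - (θ α + θ α ^ 3) * octicJacobiIm α := by
  have hζ : θ α ^ 4 = -1 := hα.mulChar_apply_pow_eq_neg_one h0 four_ne_zero hθ
  have hpow : (θ ^ 7) ^ 4 = θ ^ 4 := by
    rw [← pow_mul, ← pow_mod_orderOf θ (7 * 4), hθ]
  have hconj := hα.two_mul_jacobiSum_pow_four (θ := θ ^ 7) h0 h8 (by rw [orderOf_pow, hθ]; norm_num)
    (by rw [MulChar.pow_apply' θ (by norm_num), hneg, one_pow])
  rw [hpow, MulChar.pow_apply' θ (by norm_num)] at hconj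
  linear_combination hconj + (octicJacobiIm α : R) *
    (θ α ^ 3 + θ α * (θ α ^ 16 - θ α ^ 12 + θ α ^ 8 - θ α ^ 4 + 1)) * hζ

theorem jacobiSum_add_jacobiSum_pow_seven [CharZero R] (hα : IsPrimitiveElt α) (h0 : α ≠ 0)
    (h8 : 8 ∣ Fintype.card F - 1) (hθ : orderOf θ = 8) (hneg : θ (-1) = 1) :
    jacobiSum θ (θ ^ 4) + jacobiSum (θ ^ 7) (θ ^ 4) = 2 * octicJacobiRe α :=
  mul_left_cancel₀ two_ne_zero (by
    linear_combination hα.two_mul_jacobiSum_pow_four h0 h8 hθ hneg +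
      hα.two_mul_jacobiSum_pow_seven_pow_four h0 h8 hθ hneg)

theorem exists_card_eq_octicJacobiRe_sq_add {θ : MulChar F ℂ} (hα : IsPrimitiveElt α) (h0 : α ≠ 0)
    (h8 : 8 ∣ Fintype.card F - 1) (hθ : orderOf θ = 8) (hneg : θ (-1) = 1) :
    ∃ b : ℤ, (Fintype.card F : ℤ) = octicJacobiRe α ^ 2 + 2 * b ^ 2 := by
  have ne_one {u : ℕ} (hu : ¬8 ∣ u) : θ ^ u ≠ 1 := pow_ne_one_of_orderOf_eq hθ hu
  have hθ8 : θ ^ 8 = 1 := hθ ▸ pow_orderOf_eq_one θ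
  have hζ : θ α ^ 4 = -1 := hα.mulChar_apply_pow_eq_neg_one h0 four_ne_zero hθ
  have hnorm := jacobiSum_mul_jacobiSum_inv (ringChar_complex_ne F) (χ := θ) (φ := θ ^ 4)
    (by simpa using ne_one (u := 1) (by norm_num)) (ne_one (by norm_num))
    (by rw [← pow_succ']; exact ne_one (by norm_num))
  rw [inv_eq_of_mul_eq_one_right (show θ * θ ^ 7 = 1 by rw [← pow_succ', hθ8]),
    inv_eq_of_mul_eq_one_right (show θ ^ 4 * θ ^ 4 = 1 by rw [← pow_add, hθ8])] at hnorm
  have hcast : (2 * Fintype.card F : ℂ) = 2 * octicJacobiRe α ^ 2 + octicJacobiIm α ^ 2 := by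
    have hsqrt : (θ α + θ α ^ 3) ^ 2 = -2 := by linear_combination (θ α ^ 2 + 2) * hζ
    refine mul_left_cancel₀ two_ne_zero ?_
    linear_combination -4 * hnorm +
      2 * jacobiSum (θ ^ 7) (θ ^ 4) * hα.two_mul_jacobiSum_pow_four h0 h8 hθ hneg +
      (2 * octicJacobiRe α + (θ α + θ α ^ 3) * octicJacobiIm α) *
        hα.two_mul_jacobiSum_pow_seven_pow_four h0 h8 hθ hneg - octicJacobiIm α ^ 2 * hsqrt
  have hq : (2 * Fintype.card F : ℤ) = 2 * octicJacobiRe α ^ 2 + octicJacobiIm α ^ 2 := by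
    exact_mod_cast hcast
  obtain ⟨b, hb⟩ : 2 ∣ octicJacobiIm α :=
    Int.prime_two.dvd_of_dvd_pow (n := 2)
      ⟨Fintype.card F - octicJacobiRe α ^ 2, by linear_combination -hq⟩
  refine ⟨b, mul_left_cancel₀ (two_ne_zero' ℤ) ?_⟩
  rw [hq, hb]
  ring

end IsPrimitiveElt

end OcticJacobiSums

section QuarticClassSums

variable {F : Type*} [Field F] [Fintype F]

theorem sum_mul_jacobiSum_pow_self {R : Type*} [CommRing R] [IsDomain R] {ρ : MulChar F R}
    (hρ : orderOf ρ = 4) (hneg : ρ (-1) = 1) (w : R) :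
    ∑ u ∈ range 4, w ^ u * jacobiSum (ρ ^ u) ρ = (w + w ^ 2) * jacobiSum ρ ρ - w ^ 3 - 1 := by
  have hρ4 : ρ ^ 4 = 1 := hρ ▸ pow_orderOf_eq_one ρ
  have hρ1 : ρ ≠ 1 := by simpa using pow_ne_one_of_orderOf_eq (u := 1) hρ (by norm_num)
  have h2 : jacobiSum (ρ ^ 2) ρ = jacobiSum ρ ρ := by
    rw [jacobiSum_comm]
    simpa using jacobiSum_pow_pow_eq_of_dvd (u := 1) (v := 2) (w := 1) hρ4 hneg (by norm_num)
  have h3 : jacobiSum (ρ ^ 3) ρ = -1 := by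
    rw [jacobiSum_comm, ← inv_eq_of_mul_eq_one_right (show ρ * ρ ^ 3 = 1 by rw [← pow_succ', hρ4]),
      jacobiSum_nontrivial_inv hρ1, hneg]
  simp only [sum_range_succ, range_zero, sum_empty, pow_zero, pow_one, one_mul, zero_add,
    jacobiSum_one_nontrivial hρ1, h2, h3]
  ring

theorem isIntegral_mulChar_apply {M R : Type*} [CommMonoid M] [Finite Mˣ] [CommRing R]
    (χ : MulChar M R) (x : M) : IsIntegral ℤ (χ x) := by
  by_cases hx : IsUnit x
  · obtain ⟨u, rfl⟩ := hx
    refine IsIntegral.of_pow (orderOf_pos u) ?_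
    rw [← map_pow, ← Units.val_pow_eq_pow_val, pow_orderOf_eq_one, Units.val_one, map_one]
    exact isIntegral_one
  · rw [MulChar.map_nonunit χ hx]
    exact isIntegral_zero

theorem intCast_dvd_of_isIntegral {K : Type*} [DivisionRing K] [CharZero K] {m n : ℤ} {z : K}
    (hz : IsIntegral ℤ z) (h : m * z = n) : m ∣ n := by
  obtain rfl | hm := eq_or_ne m 0
  · rw [Int.cast_zero, zero_mul] at h
    exact zero_dvd_iff.2 (Int.cast_eq_zero.1 h.symm)
  have hrat : z = ((n / m : ℚ) : K) := by
    push_cast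
    rw [← h, Int.cast_comm, mul_div_cancel_right₀ z (Int.cast_ne_zero.2 hm)]
  obtain ⟨k, rfl⟩ := hz.exists_int_iff_exists_rat.1 ⟨_, hrat⟩
  exact ⟨k, by exact_mod_cast h.symm⟩

variable [DecidableEq F] {α : F} {θ : MulChar F ℂ}

theorem isIntegral_classSum {R : Type*} [CommRing R] {e : ℕ} (φ : MulChar F R) (k : ℕ) :
    IsIntegral ℤ (classSum α e φ k) :=
  IsIntegral.sum _ fun x _ => isIntegral_mulChar_apply φ (1 - x)

namespace IsPrimitiveElt

theorem four_mul_classSum_sq_zero (hα : IsPrimitiveElt α) (h0 : α ≠ 0)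
    (h8 : 8 ∣ Fintype.card F - 1) (hθ : orderOf θ = 8) (hneg : θ (-1) = 1) (h4 : θ 4 = -1) :
    (4 * classSum α 8 (θ ^ 2) 0 : ℂ) = -1 - octicJacobiRe α := by
  have hF : ringChar F ≠ 2 := ringChar_ne_two_of_even_card_sub_one (dvd_trans (by norm_num) h8)
  have hS := hα.sum_mul_jacobiSum_pow h0 h8 hθ (θ ^ 2) (k := 0) (l := 0) (by norm_num) (by norm_num)
  rw [sum_mul_jacobiSum_pow_sq hF hθ hneg h4] at hS
  push_cast at hS
  linear_combination -hS / 2 - 1 / 2 * hα.jacobiSum_add_jacobiSum_pow_seven h0 h8 hθ hneg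

theorem eight_mul_classSum_sq_four (hα : IsPrimitiveElt α) (h0 : α ≠ 0)
    (h8 : 8 ∣ Fintype.card F - 1) (hθ : orderOf θ = 8) (hneg : θ (-1) = 1) (h4 : θ 4 = -1) :
    (8 * classSum α 8 (θ ^ 2) 4 : ℂ) =
      4 * jacobiSum (θ ^ 2) (θ ^ 2) + 2 * octicJacobiRe α - 2 := by
  have hF : ringChar F ≠ 2 := ringChar_ne_two_of_even_card_sub_one (dvd_trans (by norm_num) h8)
  have hζ : θ α ^ 4 = -1 := hα.mulChar_apply_pow_eq_neg_one h0 four_ne_zero hθ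
  have hS := hα.sum_mul_jacobiSum_pow h0 h8 hθ (θ ^ 2) (k := 4) (l := 4) (by norm_num) (by norm_num)
  rw [sum_mul_jacobiSum_pow_sq hF hθ hneg h4, hζ] at hS
  push_cast at hS
  linear_combination -hS + hα.jacobiSum_add_jacobiSum_pow_seven h0 h8 hθ hneg

theorem eight_mul_classSum_add_classSum (hα : IsPrimitiveElt α) (h0 : α ≠ 0)
    (h8 : 8 ∣ Fintype.card F - 1) (hθ : orderOf θ = 8) (hneg : θ (-1) = 1) (h4 : θ 4 = -1) :
    (8 * (classSum α 4 (θ ^ 2) 1 + classSum α 8 (θ ^ 2) 4 +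
        θ α ^ 2 * (classSum α 4 (θ ^ 2) 3 + classSum α 8 (θ ^ 2) 4)) : ℂ) =
      2 * (1 + θ α ^ 2) * (octicJacobiRe α - 3) := by
  have hρ : orderOf (θ ^ 2) = 4 := by rw [orderOf_pow, hθ]; norm_num
  have hρneg : (θ ^ 2) (-1) = 1 := by rw [MulChar.pow_apply' θ two_ne_zero, hneg, one_pow]
  have hζ : θ α ^ 4 = -1 := hα.mulChar_apply_pow_eq_neg_one h0 four_ne_zero hθ
  have hT {k l : ℕ} (hk : k < 4) (hkl : 4 ∣ k + l) :=
    hα.sum_mul_jacobiSum_pow h0 (dvd_trans (by norm_num) h8) hρ (θ ^ 2) hk hkl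
  have hT1 := hT (k := 1) (l := 3) (by norm_num) (by norm_num)
  have hT3 := hT (k := 3) (l := 1) (by norm_num) (by norm_num)
  rw [sum_mul_jacobiSum_pow_self hρ hρneg, MulChar.pow_apply' θ two_ne_zero] at hT1 hT3
  push_cast at hT1 hT3
  have hS4 := hα.eight_mul_classSum_sq_four h0 h8 hθ hneg h4
  have hi : (θ α ^ 2) ^ 2 = -1 := by rw [← pow_mul, hζ]
  generalize θ α ^ 2 = i at hi hT1 hT3 ⊢
  linear_combination -2 * hT1 - 2 * i * hT3 + (1 + i) * hS4 +
    (jacobiSum (θ ^ 2) (θ ^ 2) * (2 * i ^ 4 - 2 * i ^ 2 + 4 * i + 4) -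
      2 * (i ^ 2 - 1) * (i * (i ^ 4 + 1) + 1)) * hi

theorem four_dvd_octicJacobiRe_add_one (hα : IsPrimitiveElt α) (h0 : α ≠ 0)
    (h8 : 8 ∣ Fintype.card F - 1) (hθ : orderOf θ = 8) (hneg : θ (-1) = 1) (h4 : θ 4 = -1) :
    4 ∣ octicJacobiRe α + 1 := by
  refine intCast_dvd_of_isIntegral (z := -classSum α 8 (θ ^ 2) 0) (isIntegral_classSum _ _).neg ?_
  push_cast
  linear_combination -hα.four_mul_classSum_sq_zero h0 h8 hθ hneg h4

end IsPrimitiveElt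

end QuarticClassSums

section Arithmetic

theorem sq_eq_sq_of_dvd_mul_sub_mul {q n a b c d : ℤ} (hq : 0 < q) (hn : 2 ≤ n)
    (hab : q = a ^ 2 + n * b ^ 2) (hcd : q = c ^ 2 + n * d ^ 2) (h : q ∣ c * b - d * a) :
    a ^ 2 = c ^ 2 := by
  have hbrahmagupta : q ^ 2 = (c * a + n * d * b) ^ 2 + n * (c * b - d * a) ^ 2 := by
    linear_combination q * hab + (a ^ 2 + n * b ^ 2) * hcd
  have hzero : c * b - d * a = 0 := by
    by_contra hne
    have hle : q ≤ |c * b - d * a| := Int.le_of_dvd (abs_pos.2 hne) ((dvd_abs _ _).2 h)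
    have hsq : q ^ 2 ≤ (c * b - d * a) ^ 2 :=
      sq_abs (c * b - d * a) ▸ pow_le_pow_left₀ hq.le hle 2
    nlinarith [sq_nonneg (c * a + n * d * b), pow_pos hq 2]
  refine mul_left_cancel₀ hq.ne' ?_
  linear_combination a ^ 2 * hcd - c ^ 2 * hab - n * (c * b + d * a) * hzero

theorem sq_eq_sq_of_prime_pow_eq_sq_add_mul_sq {p m : ℕ} (hp : p.Prime) {n a b c d : ℤ}
    (hn : 2 ≤ n) (hpn : ¬(p : ℤ) ∣ 2 * n) (hab : (p : ℤ) ^ m = a ^ 2 + n * b ^ 2)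
    (hcd : (p : ℤ) ^ m = c ^ 2 + n * d ^ 2) (ha : ¬(p : ℤ) ∣ a) (hc : ¬(p : ℤ) ∣ c) :
    a ^ 2 = c ^ 2 := by
  have hp' : Prime (p : ℤ) := Nat.prime_iff_prime_int.1 hp
  have hq : 0 < (p : ℤ) ^ m := pow_pos (mod_cast hp.pos) m
  have hprod : (p : ℤ) ^ m ∣ (c * b - d * a) * (c * b + d * a) := by
    have hcop : IsCoprime ((p : ℤ) ^ m) n :=
      (hp'.coprime_iff_not_dvd.2 fun h => hpn (dvd_mul_of_dvd_right h 2)).pow_left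
    exact hcop.dvd_of_dvd_mul_left ⟨c ^ 2 - a ^ 2, by linear_combination a ^ 2 * hcd - c ^ 2 * hab⟩
  by_cases hsub : (p : ℤ) ∣ c * b - d * a
  · by_cases hadd : (p : ℤ) ∣ c * b + d * a
    · have hb : (p : ℤ) ∣ b := by
        have h2cb : (p : ℤ) ∣ 2 * (c * b) := by
          have h := dvd_add hsub hadd
          rwa [show c * b - d * a + (c * b + d * a) = 2 * (c * b) by ring] at h
        have hcb : (p : ℤ) ∣ c * b :=
          (hp'.dvd_or_dvd h2cb).resolve_left fun h => hpn (h.mul_right n)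
        exact (hp'.dvd_or_dvd hcb).resolve_left hc
      obtain rfl | hm := eq_or_ne m 0
      · exact sq_eq_sq_of_dvd_mul_sub_mul hq hn hab hcd (by rw [pow_zero]; exact one_dvd _)
      · have ha2 : (p : ℤ) ∣ a ^ 2 := by
          rw [eq_sub_of_add_eq hab.symm]
          exact dvd_sub (dvd_pow_self _ hm) ((dvd_pow hb two_ne_zero).mul_left n)
        exact absurd (hp'.dvd_of_dvd_pow ha2) ha
    · exact sq_eq_sq_of_dvd_mul_sub_mul hq hn hab hcd (hp'.pow_dvd_of_dvd_mul_right m hadd hprod)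
  · refine sq_eq_sq_of_dvd_mul_sub_mul (d := -d) hq hn hab (by rwa [neg_sq]) ?_
    rw [neg_mul, sub_neg_eq_add]
    exact hp'.pow_dvd_of_dvd_mul_left m hsub hprod

theorem not_dvd_choose_mul_geom_sum {p a b : ℕ} (hp : p.Prime) (ha : a < p) (hb : b ≤ a) (m : ℕ) :
    ¬p ∣ (a * ∑ i ∈ range m, p ^ i).choose (b * ∑ i ∈ range m, p ^ i) := by
  have : Fact p.Prime := ⟨hp⟩
  induction m with
  | zero => simpa using hp.ne_one
  | succ m ih =>
    have split (c : ℕ) : c * ∑ i ∈ range (m + 1), p ^ i = c + p * (c * ∑ i ∈ range m, p ^ i) := by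
      rw [geom_sum_succ]
      ring
    have digit {c : ℕ} (hc : c < p) (n : ℕ) : (c + p * n) % p = c ∧ (c + p * n) / p = n := by
      rw [Nat.add_mul_mod_self_left, Nat.add_mul_div_left _ _ hp.pos, Nat.mod_eq_of_lt hc,
        Nat.div_eq_of_lt hc, zero_add]
      exact ⟨rfl, rfl⟩
    have hbase : ¬p ∣ a.choose b := fun h => ha.not_ge <| (hp.dvd_factorial).1 <|
      Nat.choose_mul_factorial_mul_factorial hb ▸ (h.mul_right _).mul_right _
    have hlucas := Choose.choose_modEq_choose_mod_mul_choose_div_nat (p := p)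
      (n := a * ∑ i ∈ range (m + 1), p ^ i) (k := b * ∑ i ∈ range (m + 1), p ^ i)
    rw [split, split, (digit ha _).1, (digit ha _).2, (digit (hb.trans_lt ha) _).1,
      (digit (hb.trans_lt ha) _).2] at hlucas
    rw [split, split, hlucas.dvd_iff dvd_rfl, hp.dvd_mul]
    exact not_or.2 ⟨hbase, ih⟩

theorem four_dvd_of_sixteen_dvd_mul {a b : ℕ} (ha : ¬8 ∣ a) (h : 16 ∣ a * b) : 4 ∣ b := by
  have hgcd : Nat.gcd 16 a ∣ 4 := by
    obtain ⟨k, -, hgcd⟩ := (Nat.dvd_prime_pow Nat.prime_two (m := 4)).1 (Nat.gcd_dvd_left 16 a)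
    have hk3 : k < 3 := by
      by_contra! h
      exact ha (dvd_trans (pow_dvd_pow 2 h) (hgcd ▸ Nat.gcd_dvd_right 16 a))
    exact hgcd ▸ pow_dvd_pow 2 (by lia : k ≤ 2)
  exact Nat.dvd_of_mul_dvd_mul_left (by norm_num : 0 < 4)
    ((Nat.dvd_gcd_mul_iff_dvd_mul.2 h).trans (Nat.mul_dvd_mul_right hgcd b))

end Arithmetic

section RationalPart

variable {F : Type*} [Field F] [Fintype F] [DecidableEq F] {α : F} {g : ℕ}

namespace IsPrimitiveElt

theorem sum_cycClass_pow_mul_one_sub_pow (hα : IsPrimitiveElt α) (h0 : α ≠ 0)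
    (hg : Fintype.card F - 1 = 8 * g) :
    ∑ x ∈ cycClass α 4 0, x ^ g * (1 - x) ^ (4 * g) =
      (-1) ^ g * (4 * g) * ((4 * g).choose g : F) := by
  have hg0 : 0 < g := Nat.pos_of_mul_pos_left (hg ▸ Nat.sub_pos_of_lt Fintype.one_lt_card)
  have hpow (j : ℕ) : ∑ x ∈ cycClass α 4 0, x ^ (g + j) =
      if 2 * g ∣ g + j then (2 * g : F) else 0 := by
    simpa using hα.sum_cycClass_zero_pow h0 (by lia : Fintype.card F - 1 = 4 * (2 * g)) (g + j)
  have hexpand (x : F) : x ^ g * (1 - x) ^ (4 * g) =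
      ∑ j ∈ range (4 * g + 1), (-1) ^ j * ((4 * g).choose j : F) * x ^ (g + j) := by
    rw [sub_eq_neg_add, add_pow, mul_sum]
    refine sum_congr rfl fun j _ => ?_
    rw [neg_pow, one_pow, pow_add]
    ring
  have hdvd {j : ℕ} (hj : j ∈ range (4 * g + 1)) (h : 2 * g ∣ g + j) : j = g ∨ j = 3 * g := by
    obtain ⟨c, hc⟩ := h
    have hj' : j < 4 * g + 1 := mem_range.1 hj
    have hc3 : c < 3 := by nlinarith
    interval_cases c <;> lia
  calc ∑ x ∈ cycClass α 4 0, x ^ g * (1 - x) ^ (4 * g)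
      = ∑ j ∈ range (4 * g + 1), (-1) ^ j * ((4 * g).choose j : F) *
          if 2 * g ∣ g + j then (2 * g : F) else 0 := by
        simp only [hexpand, ← hpow, mul_sum]
        exact sum_comm
    _ = (-1) ^ g * ((4 * g).choose g : F) * (2 * g) +
          (-1) ^ (3 * g) * ((4 * g).choose (3 * g) : F) * (2 * g) := by
        rw [sum_eq_add (a := g) (b := 3 * g) (by lia), if_pos ⟨1, by ring⟩, if_pos ⟨2, by ring⟩]
        · intro j hj hne
          rw [if_neg fun h => not_or.2 hne (hdvd hj h), mul_zero]
        · exact fun h => absurd (mem_range.2 (by lia)) h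
        · exact fun h => absurd (mem_range.2 (by lia)) h
    _ = (-1) ^ g * (4 * g) * ((4 * g).choose g : F) := by
        rw [Nat.choose_symm_of_eq_add (by ring : 4 * g = 3 * g + g), pow_mul (-1) 3,
          Odd.neg_one_pow (n := 3) (by decide)]
        ring

theorem octicJacobiRe_cast (hα : IsPrimitiveElt α) (h0 : α ≠ 0)
    (hg : Fintype.card F - 1 = 8 * g) :
    (octicJacobiRe α : F) = (-1) ^ g * (4 * g) * ((4 * g).choose g : F) := by
  have hF : ringChar F ≠ 2 := ringChar_ne_two_of_even_card_sub_one ⟨4 * g, by rw [hg]; ring⟩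
  have euler (x : F) : ((quadraticChar F x : ℤ) : F) = x ^ (4 * g) := by
    rw [quadraticChar_eq_pow_of_char_ne_two' hF, show Fintype.card F / 2 = 4 * g by lia]
  have hpow {k : ℕ} {x : F} (hx : x ∈ cycClass α 8 (4 * k)) : x ^ g = (-1) ^ k := by
    obtain ⟨j, -, rfl⟩ := mem_image.1 hx
    rw [← hα.pow_eq_neg_one h0 (by lia : Fintype.card F - 1 = 2 * (4 * g)), ← pow_mul, ← pow_mul,
      show (8 * j + 4 * k) * g = (8 * g) * j + 4 * g * k by ring, pow_add, pow_mul, ← hg,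
      FiniteField.pow_card_sub_one_eq_one α h0, one_pow, one_mul]
  rw [← hα.sum_cycClass_pow_mul_one_sub_pow h0 hg,
    hα.sum_cycClass_eq_add (e := 4) h0 ⟨g, hg⟩, octicJacobiRe, classSum, classSum]
  push_cast
  rw [sub_eq_add_neg, ← sum_neg_distrib]
  congr 1
  · exact sum_congr rfl fun x hx => by rw [euler, hpow (k := 0) hx, pow_zero, one_mul]
  · exact sum_congr rfl fun x hx => by rw [euler, hpow (k := 1) hx, pow_one, neg_one_mul]

theorem not_dvd_octicJacobiRe (hα : IsPrimitiveElt α) (h0 : α ≠ 0) {p m : ℕ} (hp : p.Prime)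
    (hq : Fintype.card F = p ^ m) (hp8 : p % 8 = 1) : ¬(p : ℤ) ∣ octicJacobiRe α := by
  have : Fact p.Prime := ⟨hp⟩
  have := charP_of_card_eq_prime_pow hq
  obtain ⟨s, rfl⟩ : ∃ s, p = 8 * s + 1 := ⟨p / 8, by lia⟩
  set g := s * ∑ i ∈ range m, (8 * s + 1) ^ i with hgdef
  have hg : Fintype.card F = 8 * g + 1 := by
    have hgeom := geom_sum_mul_add (8 * s) m
    rw [hq, hgdef]
    linarith
  have h4g : (4 * g : F) ≠ 0 := fun h => one_ne_zero (α := F) <| by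
    have hcard : (Fintype.card F : F) = 0 := Nat.cast_card_eq_zero F
    rw [hg] at hcard
    push_cast at hcard
    linear_combination hcard - 2 * h
  have hchoose : ¬(8 * s + 1) ∣ (4 * g).choose g := by
    rw [hgdef, ← mul_assoc]
    exact not_dvd_choose_mul_geom_sum hp (by lia) (by lia) m
  rw [← CharP.intCast_eq_zero_iff F (8 * s + 1), hα.octicJacobiRe_cast h0 (by lia : _ = 8 * g)]
  have hsign : ((-1) ^ g : F) ≠ 0 := pow_ne_zero _ (neg_ne_zero.2 one_ne_zero)
  exact mul_ne_zero (mul_ne_zero hsign h4g) ((CharP.cast_eq_zero_iff F _ _).not.2 hchoose)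

theorem octicJacobiRe_eq_three {θ : MulChar F ℂ} (hα : IsPrimitiveElt α) (h0 : α ≠ 0)
    {p m : ℕ} (hp : p.Prime) (hq : Fintype.card F = p ^ m) (hp8 : p % 8 = 1)
    (hθ : orderOf θ = 8) (hneg : θ (-1) = 1) (h4 : θ 4 = -1) {b : ℤ}
    (hb : (Fintype.card F : ℤ) = 3 ^ 2 + 2 * b ^ 2) : octicJacobiRe α = 3 := by
  have h8 : 8 ∣ Fintype.card F - 1 := by
    have hq8 : Fintype.card F % 8 = 1 := by simp [hq, Nat.pow_mod, hp8]
    lia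
  obtain ⟨B, hB⟩ := hα.exists_card_eq_octicJacobiRe_sq_add h0 h8 hθ hneg
  have hp9 : 9 ≤ p := by
    have := hp.one_lt
    lia
  have hsq : octicJacobiRe α ^ 2 = 3 ^ 2 := by
    rw [hq, Nat.cast_pow] at hB hb
    refine sq_eq_sq_of_prime_pow_eq_sq_add_mul_sq hp le_rfl ?_ hB hb
      (hα.not_dvd_octicJacobiRe h0 hp hq hp8) ?_
    · exact fun h => absurd (Int.le_of_dvd (by norm_num) h) (by lia)
    · exact fun h => absurd (Int.le_of_dvd (by norm_num) h) (by lia)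
  have hmod := hα.four_dvd_octicJacobiRe_add_one h0 h8 hθ hneg h4
  rcases sq_eq_sq_iff_eq_or_eq_neg.1 hsq with h | h
  · exact h
  · lia

end IsPrimitiveElt

end RationalPart

section Two

theorem IsPrimitiveElt.mulChar_neg_one_eq_one {F R : Type*} [Field F] [Fintype F]
    [CommMonoidWithZero R] {α : F} (hα : IsPrimitiveElt α) (h0 : α ≠ 0) {χ : MulChar F R} {n : ℕ}
    (hn : 2 * n ∣ Fintype.card F - 1) (hχ : χ ^ n = 1) : χ (-1) = 1 := by
  obtain ⟨c, hc⟩ := hn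
  have hαn : χ α ^ n = 1 := by
    rw [← Units.val_mk0 h0, ← MulChar.pow_apply_coe, hχ, MulChar.one_apply_coe]
  rw [← hα.pow_eq_neg_one h0 (by rw [hc, mul_assoc] : _ = 2 * (n * c)), map_pow, pow_mul, hαn,
    one_pow]

variable {F : Type*} [Field F] [Fintype F] [DecidableEq F] {α : F}

namespace IsPrimitiveElt

theorem two_mem_cycClass_four_zero (hα : IsPrimitiveElt α) (h0 : α ≠ 0) {p m : ℕ} (hp : p.Prime)
    (hq : Fintype.card F = p ^ m) (hq16 : Fintype.card F % 16 = 1) (hp8 : ¬8 ∣ p - 1) :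
    (2 : F) ∈ cycClass α 4 0 := by
  have : Fact p.Prime := ⟨hp⟩
  have := charP_of_card_eq_prime_pow hq
  have h2 : (2 : F) ≠ 0 :=
    Ring.two_ne_zero (ringChar_ne_two_of_even_card_sub_one (by lia : 2 ∣ Fintype.card F - 1))
  have hgeom : Fintype.card F - 1 = (p - 1) * ∑ i ∈ range m, p ^ i := by
    rw [hq, mul_comm, geom_sum_mul_of_one_le hp.one_le]
  obtain ⟨c, hc⟩ : 4 ∣ ∑ i ∈ range m, p ^ i :=
    four_dvd_of_sixteen_dvd_mul hp8 (hgeom ▸ by lia : 16 ∣ (p - 1) * ∑ i ∈ range m, p ^ i)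
  have hfermat : (2 : F) ^ (p - 1) = 1 := by
    refine mul_right_cancel₀ h2 ?_
    rw [one_mul, ← pow_succ, Nat.sub_add_cancel hp.one_le]
    exact map_ofNat (frobenius F p) 2
  rw [hα.mem_cycClass_zero_iff h0 (by rw [hgeom, hc]; ring : _ = 4 * ((p - 1) * c)) h2,
    pow_mul, hfermat, one_pow]

theorem two_mem_cycClass_four_two (hα : IsPrimitiveElt α) (h0 : α ≠ 0)
    (h8 : 8 ∣ Fintype.card F - 1) (h2 : (2 : F) ∉ cycClass α 4 0) :
    (2 : F) ∈ cycClass α 4 2 := by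
  have h4 : 4 ∣ Fintype.card F - 1 := dvd_trans (by norm_num) h8
  have hF : ringChar F ≠ 2 := ringChar_ne_two_of_even_card_sub_one (dvd_trans (by norm_num) h8)
  have hsq : (2 : F) ∈ cycClass α 2 0 := by
    have hcard := Fintype.one_lt_card (α := F)
    rw [hα.mem_cycClass_zero_iff h0 (by lia : _ = 2 * (Fintype.card F / 2)) (Ring.two_ne_zero hF),
      ← FiniteField.isSquare_iff hF (Ring.two_ne_zero hF), FiniteField.isSquare_two_iff]
    lia
  rw [← hα.cycClass_union_cycClass_add h0 (e := 2) h4] at hsq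
  exact (mem_union.1 hsq).resolve_left h2

theorem mulChar_four_eq_neg_one {θ : MulChar F ℂ} (hα : IsPrimitiveElt α) (h0 : α ≠ 0)
    (h8 : 8 ∣ Fintype.card F - 1) (hθ : orderOf θ = 8) (h2 : (2 : F) ∉ cycClass α 4 0) :
    θ 4 = -1 := by
  have hθ2 : (θ ^ 2) ^ 4 = 1 := by rw [← pow_mul, ← orderOf_dvd_iff_pow_eq_one, hθ]
  have htwo := mulChar_apply_of_mem_cycClass h0 hθ2 (hα.two_mem_cycClass_four_two h0 h8 h2)
  calc θ 4 = (θ ^ 2) 2 := by rw [MulChar.pow_apply' _ two_ne_zero, ← map_pow]; norm_num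
    _ = θ α ^ 4 := by rw [htwo, MulChar.pow_apply' _ two_ne_zero, ← pow_mul]
    _ = -1 := hα.mulChar_apply_pow_eq_neg_one h0 four_ne_zero hθ

end IsPrimitiveElt

end Two

section ExternalDifferences

/-- The multiset `∑_{i ≠ j} Δ(D_i, D_j)` of all external differences of a family of subsets. -/
def externalDiff {ι G : Type*} [Fintype ι] [DecidableEq ι] [AddCommGroup G] (D : ι → Finset G) :
    Multiset G :=
  ∑ i, ∑ j ∈ univ.erase i, extDiff (D i) (D j)

variable {ι G : Type*} [Fintype ι] [DecidableEq ι] [AddCommGroup G]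

theorem zero_notMem_externalDiff {D : ι → Finset G}
    (hD : Pairwise fun i j => Disjoint (D i) (D j)) : 0 ∉ externalDiff D := by
  simp only [externalDiff, extDiff, Multiset.mem_sum, mem_erase, mem_univ, and_true, true_and,
    Multiset.mem_map, mem_val, mem_product, sub_eq_zero, Prod.exists, not_exists, not_and, and_imp]
  rintro i j hji x y hx hy rfl
  exact disjoint_left.1 (hD hji) hy hx

theorem externalDiff_comp_equiv (D : ι → Finset G) (σ : ι ≃ ι) :
    externalDiff (D ∘ σ) = externalDiff D := by
  rw [externalDiff, externalDiff, ← σ.sum_comp (fun i => ∑ j ∈ univ.erase i, extDiff (D i) (D j))]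
  exact sum_congr rfl fun i _ => sum_equiv σ (by simp) fun _ _ => rfl

theorem map_externalDiff {H : Type*} [AddCommGroup H] [DecidableEq H] {f : G →+ H}
    (hf : Function.Injective f) (D : ι → Finset G) :
    (externalDiff D).map f = externalDiff fun i => (D i).image f := by
  have map_extDiff (A B : Finset G) :
      (extDiff A B).map f = extDiff (A.image f) (B.image f) := by
    rw [extDiff, extDiff, ← prodMap_image_product, image_val_of_injOn (hf.prodMap hf).injOn,
      Multiset.map_map, Multiset.map_map]
    exact Multiset.map_congr rfl fun x _ => map_sub f x.1 x.2
  simp only [externalDiff, ← Multiset.coe_mapAddMonoidHom, map_sum]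
  simp only [Multiset.coe_mapAddMonoidHom, map_extDiff]

theorem sum_map_externalDiff {R : Type*} [AddCommMonoid R] (D : ι → Finset G) (φ : G → R) :
    ((externalDiff D).map φ).sum =
      ∑ i, ∑ j ∈ univ.erase i, ∑ x ∈ D i, ∑ y ∈ D j, φ (x - y) := by
  have sum_map_extDiff (A B : Finset G) :
      ((extDiff A B).map φ).sum = ∑ x ∈ A, ∑ y ∈ B, φ (x - y) := by
    rw [extDiff, Multiset.map_map, ← sum_product' A B fun x y => φ (x - y)]
    rfl
  rw [← Multiset.coe_mapAddMonoidHom, ← Multiset.coe_sumAddMonoidHom, externalDiff]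
  simp only [map_sum]
  simp only [Multiset.coe_mapAddMonoidHom, Multiset.coe_sumAddMonoidHom, sum_map_extDiff]

variable [Fintype G] [DecidableEq G] {T : Finset G}

theorem eq_nsmul_val_add_nsmul_val_sdiff (hT : 0 ∉ T) {M : Multiset G} (h0 : 0 ∉ M) {lam mu : ℕ}
    (hlam : ∀ x ∈ T, M.count x = lam) (hmu : ∀ x ∈ Gstar G \ T, M.count x = mu) :
    M = lam • T.val + mu • (Gstar G \ T).val := by
  ext x
  rw [Multiset.count_add, Multiset.count_nsmul, Multiset.count_nsmul,
    Multiset.count_eq_of_nodup T.nodup, Multiset.count_eq_of_nodup (Gstar G \ T).nodup]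
  simp only [mem_val]
  by_cases hx : x ∈ T
  · simp [hx, hlam x hx]
  · by_cases hx0 : x = 0
    · simp [hx0, hT, h0, Gstar]
    · have hxT : x ∈ Gstar G \ T := by simp [Gstar, hx0, hx]
      simp [hx, hxT, hmu x hxT]

theorem IsEPDF.isEDF {D : ι → Finset G} {n m : ℕ} {k : ι → ℕ} {lam : ℕ}
    (h : IsEPDF D n m k T lam lam) (hT : 0 ∉ T) : IsEDF D n m k lam := by
  obtain ⟨hn, hm, hzero, hcard, hdisj, hdiff⟩ := h
  have hsub : T ⊆ Gstar G := fun x hx => mem_erase.2 ⟨fun h => hT (h ▸ hx), mem_univ x⟩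
  refine ⟨hn, hm, hzero, hcard, hdisj, ?_⟩
  rw [hdiff, ← smul_add, sdiff_val, add_tsub_cancel_of_le (val_le_iff.2 hsub)]

end ExternalDifferences

section CyclotomicFamilies

variable {F R : Type*} [Field F] [Fintype F] [DecidableEq F] {α : F} {e k : ℕ}

theorem apply_eq_of_mem_cycClass {M : Type*} {w : F → M} (hw : ∀ x, w (α ^ e * x) = w x) {x : F}
    (hx : x ∈ cycClass α e k) : w x = w (α ^ k) := by
  obtain ⟨j, -, rfl⟩ := mem_image.1 hx
  clear hx
  induction j with
  | zero => rw [mul_zero, zero_add]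
  | succ j ih => rw [← ih, ← hw (α ^ (e * j + k)), ← pow_add]; ring_nf

theorem IsPrimitiveElt.sum_mul_mulChar {F R : Type*} [Field F] [Fintype F] [CommRing R]
    {α : F} {e : ℕ} (hα : IsPrimitiveElt α) (h0 : α ≠ 0) (he : e ∣ Fintype.card F - 1)
    {w : F → R} (hw : ∀ x, w (α ^ e * x) = w x) {χ : MulChar F R} (hχ : χ ^ e = 1) :
    ∑ x, w x * χ x = ((Fintype.card F - 1) / e : ℕ) * ∑ k ∈ range e, w (α ^ k) * χ α ^ k := by
  classical
  cases subsingleton_or_nontrivial R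
  · exact Subsingleton.elim _ _
  rw [hα.sum_eq_add_sum_cycClass h0 he, MulChar.map_zero, mul_zero, zero_add, mul_sum]
  refine sum_congr rfl fun k _ => ?_
  rw [← hα.card_cycClass h0 he k, ← nsmul_eq_mul, ← sum_const]
  exact sum_congr rfl fun x hx => by
    rw [apply_eq_of_mem_cycClass hw hx, mulChar_apply_of_mem_cycClass h0 hχ hx]

namespace IsPrimitiveElt

theorem gstar_sdiff_cycClass_two (hα : IsPrimitiveElt α) (h0 : α ≠ 0)
    (h2 : 2 ∣ Fintype.card F - 1) : Gstar F \ cycClass α 2 0 = cycClass α 2 1 := by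
  have hdisj : Disjoint (cycClass α 2 0) (cycClass α 2 1) := hα.disjoint_cycClass h0 h2 (by decide)
  rw [Gstar, ← hα.biUnion_range_cycClass h0 h2]
  simp only [range_add_one, range_zero, biUnion_insert, biUnion_empty, union_empty]
  rw [union_sdiff_cancel_right hdisj.symm]

variable [CommRing R]

theorem classSum_mod (hα : IsPrimitiveElt α) (h0 : α ≠ 0) (he : e ∣ Fintype.card F - 1)
    (φ : MulChar F R) : classSum α e φ (k % e) = classSum α e φ k := by
  rw [classSum, hα.cycClass_congr h0 he (Nat.mod_modEq k e), classSum]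

theorem classSum_one (hα : IsPrimitiveElt α) (h0 : α ≠ 0) (he : e ∣ Fintype.card F - 1)
    (hk : ¬e ∣ k) : classSum α e (1 : MulChar F R) k = ((Fintype.card F - 1) / e : ℕ) := by
  have hone : (1 : F) ∉ cycClass α e k := fun h =>
    hk <| (Nat.modEq_zero_iff_dvd).1 <|
      ((hα.pow_mem_cycClass_iff h0 he (n := 0)).1 (by rwa [pow_zero])).symm
  have heq {x : F} (hx : x ∈ cycClass α e k) : (1 : MulChar F R) (1 - x) = 1 :=
    MulChar.one_apply (sub_ne_zero.2 fun h : 1 = x => hone (h ▸ hx)).isUnit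
  rw [classSum, sum_congr rfl fun x hx => heq hx, sum_const, hα.card_cycClass h0 he, nsmul_one]

theorem sum_sum_mulChar_sub (hα : IsPrimitiveElt α) (h0 : α ≠ 0) (he : e ∣ Fintype.card F - 1)
    {χ : MulChar F R} (hχ : χ ^ e = 1) (k l : ℕ) :
    ∑ x ∈ cycClass α e k, ∑ y ∈ cycClass α e (k + l), χ (x - y) =
      ((Fintype.card F - 1) / e : ℕ) * (χ α ^ k * classSum α e χ l) := by
  rw [← hα.card_cycClass h0 he k, ← nsmul_eq_mul, ← sum_const]
  refine sum_congr rfl fun x hx => ?_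
  obtain ⟨n, rfl, hn⟩ := hα.exists_pow_of_mem_cycClass h0 he hx
  rw [hα.cycClass_congr h0 he (hn.symm.add_right l), sum_cycClass_add h0, classSum, mul_sum,
    ← mulChar_apply_of_mem_cycClass h0 hχ hx]
  exact sum_congr rfl fun y _ => by rw [← map_mul, mul_sub, mul_one]

theorem sum_map_externalDiff_cycClass {ι : Type*} [Fintype ι] [DecidableEq ι]
    (hα : IsPrimitiveElt α) (h0 : α ≠ 0) (he : e ∣ Fintype.card F - 1) {χ : MulChar F R}
    (hχ : χ ^ e = 1) (s : ι → ℕ) :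
    ((externalDiff fun i => cycClass α e (s i)).map χ).sum = ((Fintype.card F - 1) / e : ℕ) *
      ∑ i, ∑ j ∈ univ.erase i, χ α ^ s i * classSum α e χ ((s j + (e - 1) * s i) % e) := by
  have he0 : 0 < e := Nat.pos_of_dvd_of_pos he (Nat.sub_pos_of_lt Fintype.one_lt_card)
  simp only [sum_map_externalDiff, mul_sum]
  refine sum_congr rfl fun i _ => sum_congr rfl fun j _ => ?_
  have hmod : s j ≡ s i + (s j + (e - 1) * s i) [MOD e] := by
    obtain ⟨d, rfl⟩ : ∃ d, e = d + 1 := ⟨e - 1, by lia⟩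
    rw [Nat.add_sub_cancel, show s i + (s j + d * s i) = s j + (d + 1) * s i by ring]
    simp [Nat.ModEq]
  rw [hα.cycClass_congr h0 he hmod, hα.sum_sum_mulChar_sub h0 he hχ, hα.classSum_mod h0 he]

end IsPrimitiveElt

end CyclotomicFamilies

section OcticFamily

variable {F R : Type*} [Field F] [Fintype F] [DecidableEq F] {α : F}

/-- The family `C_0^8, C_1^8, C_4^8, C_5^8` of cyclotomic classes of order eight. -/
def octicFamily (α : F) : Fin 4 → Finset F :=
  ![cycClass α 8 0, cycClass α 8 1, cycClass α 8 4, cycClass α 8 5]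

theorem octicFamily_eq : octicFamily α = fun i => cycClass α 8 (![0, 1, 4, 5] i) := by
  funext i
  fin_cases i <;> rfl

namespace IsPrimitiveElt

theorem pairwise_disjoint_octicFamily (hα : IsPrimitiveElt α) (h0 : α ≠ 0)
    (h8 : 8 ∣ Fintype.card F - 1) :
    Pairwise fun i j => Disjoint (octicFamily α i) (octicFamily α j) := by
  have hmod : ∀ i j : Fin 4, i ≠ j → ¬![0, 1, 4, 5] i ≡ ![0, 1, 4, 5] j [MOD 8] := by decide
  rw [octicFamily_eq]
  exact fun i j hij => hα.disjoint_cycClass h0 h8 (hmod i j hij)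

theorem count_externalDiff_octicFamily_mul (hα : IsPrimitiveElt α) (h0 : α ≠ 0)
    (h8 : 8 ∣ Fintype.card F - 1) (x : F) :
    (externalDiff (octicFamily α)).count (α ^ 4 * x) = (externalDiff (octicFamily α)).count x := by
  have hinj : Function.Injective (AddMonoidHom.mulLeft (α ^ 4)) :=
    mul_right_injective₀ (pow_ne_zero 4 h0)
  have hshift : ∀ i : Fin 4, 4 + ![0, 1, 4, 5] i ≡ ![0, 1, 4, 5] (i + 2) [MOD 8] := by decide
  have himage : (fun i => (octicFamily α i).image (AddMonoidHom.mulLeft (α ^ 4))) =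
      octicFamily α ∘ Equiv.addRight 2 := by
    rw [octicFamily_eq]
    funext i
    exact (image_mul_cycClass 4).trans (hα.cycClass_congr h0 h8 (hshift i))
  have hmap : (externalDiff (octicFamily α)).map (AddMonoidHom.mulLeft (α ^ 4)) =
      externalDiff (octicFamily α) := by
    rw [map_externalDiff hinj, himage, externalDiff_comp_equiv]
  conv_lhs => rw [← hmap]
  exact Multiset.count_map_eq_count' _ _ hinj x

variable [CommRing R]

theorem sum_map_externalDiff_octicFamily (hα : IsPrimitiveElt α) (h0 : α ≠ 0)
    (h8 : 8 ∣ Fintype.card F - 1) {χ : MulChar F R} (hχ : χ ^ 4 = 1) :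
    ((externalDiff (octicFamily α)).map χ).sum = ((Fintype.card F - 1) / 8 : ℕ) * (2 *
      (classSum α 4 χ 1 + classSum α 8 χ 4 + χ α * (classSum α 4 χ 3 + classSum α 8 χ 4))) := by
  have hα4 : χ α ^ 4 = 1 := by
    rw [← Units.val_mk0 h0, ← MulChar.pow_apply_coe, hχ, MulChar.one_apply_coe]
  have hχ8 : χ ^ 8 = 1 := by rw [show 8 = 4 * 2 from rfl, pow_mul, hχ, one_pow]
  rw [octicFamily_eq, hα.sum_map_externalDiff_cycClass h0 h8 hχ8,
    hα.classSum_eq_add h0 (e := 4) h8, hα.classSum_eq_add h0 (e := 4) h8]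
  congr 1
  simp only [sum_erase_eq_sub (mem_univ _), Fin.sum_univ_four, Matrix.cons_val]
  norm_num only
  linear_combination (classSum α 8 χ 1 + classSum α 8 χ 4 + classSum α 8 χ 5 +
    χ α * (classSum α 8 χ 3 + classSum α 8 χ 4 + classSum α 8 χ 7)) * hα4

theorem sum_count_externalDiff_octicFamily [IsDomain R] [CharZero R] (hα : IsPrimitiveElt α)
    (h0 : α ≠ 0) (h8 : 8 ∣ Fintype.card F - 1) {χ : MulChar F R} (hχ : χ ^ 4 = 1) :
    ∑ k ∈ range 4, ((externalDiff (octicFamily α)).count (α ^ k) : R) * χ α ^ k =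
      classSum α 4 χ 1 + classSum α 8 χ 4 + χ α * (classSum α 4 χ 3 + classSum α 8 χ 4) := by
  have hcount : ((externalDiff (octicFamily α)).map χ).sum =
      ∑ x, ((externalDiff (octicFamily α)).count x : R) * χ x := by
    rw [sum_multiset_map_count, sum_subset (subset_univ _)]
    · simp only [nsmul_eq_mul]
    · intro x _ hx
      rw [Multiset.count_eq_zero.2 (mt Multiset.mem_toFinset.2 hx), zero_smul]
  have hinv (x : F) : ((externalDiff (octicFamily α)).count (α ^ 4 * x) : R) =
      (externalDiff (octicFamily α)).count x := by
    rw [hα.count_externalDiff_octicFamily_mul h0 h8]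
  have hq := Fintype.one_lt_card (α := F)
  have hquarter : (Fintype.card F - 1) / 4 = 2 * ((Fintype.card F - 1) / 8) := by lia
  have hne : (((Fintype.card F - 1) / 4 : ℕ) : R) ≠ 0 := Nat.cast_ne_zero.2 (by lia)
  refine mul_left_cancel₀ hne ?_
  rw [← hα.sum_mul_mulChar h0 (dvd_trans (by norm_num) h8)
      (w := fun x => ((externalDiff (octicFamily α)).count x : R)) hinv hχ, ← hcount,
    hα.sum_map_externalDiff_octicFamily h0 h8 hχ, hquarter]
  push_cast
  ring

end IsPrimitiveElt

end OcticFamily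

section MainTheorem

theorem intCast_add_intCast_mul_eq_zero_iff {i : ℂ} (hi : i ^ 2 = -1) {a b : ℤ} :
    (a + b * i : ℂ) = 0 ↔ a = 0 ∧ b = 0 := by
  refine ⟨fun h => ?_, fun ⟨ha, hb⟩ => by simp [ha, hb]⟩
  have hnorm : a ^ 2 + b ^ 2 = 0 := by
    have hnorm' : (a ^ 2 + b ^ 2 : ℂ) = 0 := by linear_combination (a - b * i) * h + b ^ 2 * hi
    exact_mod_cast hnorm'
  constructor <;> nlinarith [sq_nonneg a, sq_nonneg b]

variable {F : Type*} [Field F] [Fintype F] [DecidableEq F] {α : F}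

namespace IsPrimitiveElt

theorem sum_count_octicFamily (hα : IsPrimitiveElt α) (h0 : α ≠ 0)
    (h8 : 8 ∣ Fintype.card F - 1) :
    4 * ∑ k ∈ range 4, ((externalDiff (octicFamily α)).count (α ^ k) : ℤ) =
      3 * (Fintype.card F - 1) := by
  have hcount := hα.sum_count_externalDiff_octicFamily h0 h8 (one_pow 4 : (1 : MulChar F ℤ) ^ 4 = 1)
  have hone : (1 : MulChar F ℤ) α = 1 := MulChar.one_apply h0.isUnit
  have h4 : 4 ∣ Fintype.card F - 1 := dvd_trans (by norm_num) h8
  have hq := Fintype.one_lt_card (α := F)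
  rw [hα.classSum_one h0 h4 (by norm_num), hα.classSum_one h0 h4 (by norm_num),
    hα.classSum_one h0 h8 (by norm_num), hone] at hcount
  simp only [one_pow, mul_one] at hcount
  rw [hcount]
  lia

theorem alternating_sum_count_octicFamily (hα : IsPrimitiveElt α) (h0 : α ≠ 0)
    (h8 : 8 ∣ Fintype.card F - 1) :
    ∑ k ∈ range 4, ((externalDiff (octicFamily α)).count (α ^ k) : ℤ) * (-1) ^ k =
      2 * classSum α 4 (quadraticChar F) 1 := by
  have h4 : 4 ∣ Fintype.card F - 1 := dvd_trans (by norm_num) h8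
  have hF : ringChar F ≠ 2 := ringChar_ne_two_of_even_card_sub_one (dvd_trans (by norm_num) h8)
  have hcount := hα.sum_count_externalDiff_octicFamily h0 h8
    ((quadraticChar_isQuadratic F).pow_even (by decide : Even 4))
  rw [hα.quadraticChar_apply h0 hF, hα.classSum_quadraticChar_three h0 h4] at hcount
  rw [hcount]
  ring

theorem count_octicFamily_eq {θ : MulChar F ℂ} (hα : IsPrimitiveElt α) (h0 : α ≠ 0)
    (h8 : 8 ∣ Fintype.card F - 1) (hθ : orderOf θ = 8) (hneg : θ (-1) = 1) (h4 : θ 4 = -1)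
    (hA : octicJacobiRe α = 3) :
    (externalDiff (octicFamily α)).count (α ^ 2) = (externalDiff (octicFamily α)).count (α ^ 0) ∧
      (externalDiff (octicFamily α)).count (α ^ 3) =
        (externalDiff (octicFamily α)).count (α ^ 1) := by
  have hθ8 : (θ ^ 2) ^ 4 = 1 := by rw [← pow_mul, ← orderOf_dvd_iff_pow_eq_one, hθ]
  have hi : (θ α ^ 2) ^ 2 = -1 := by
    rw [← pow_mul]
    exact hα.mulChar_apply_pow_eq_neg_one h0 four_ne_zero hθ
  have hclass := hα.eight_mul_classSum_add_classSum h0 h8 hθ hneg h4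
  have hcount := hα.sum_count_externalDiff_octicFamily h0 h8 hθ8
  rw [hA] at hclass
  rw [MulChar.pow_apply' _ two_ne_zero] at hcount
  simp only [sum_range_succ, range_zero, sum_empty, zero_add] at hcount
  set N : ℕ → ℕ := fun k => (externalDiff (octicFamily α)).count (α ^ k)
  have hgauss : ((N 0 - N 2 : ℤ) + (N 1 - N 3 : ℤ) * θ α ^ 2 : ℂ) = 0 := by
    push_cast
    linear_combination hcount + hclass / 8 - (N 2 + N 3 * θ α ^ 2) * hi
  have hzero := (intCast_add_intCast_mul_eq_zero_iff hi).1 hgauss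
  lia

theorem exists_externalDiff_octicFamily_eq {θ : MulChar F ℂ} (hα : IsPrimitiveElt α) (h0 : α ≠ 0)
    (h8 : 8 ∣ Fintype.card F - 1) (hθ : orderOf θ = 8) (hneg : θ (-1) = 1) (h4 : θ 4 = -1)
    (hA : octicJacobiRe α = 3) :
    ∃ lam mu : ℕ,
      16 * (lam : ℤ) = 3 * Fintype.card F - 3 + 8 * classSum α 4 (quadraticChar F) 1 ∧
      16 * (mu : ℤ) = 3 * Fintype.card F - 3 - 8 * classSum α 4 (quadraticChar F) 1 ∧
      externalDiff (octicFamily α) =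
        lam • (cycClass α 2 0).val + mu • (Gstar F \ cycClass α 2 0).val := by
  have hdvd2 : 2 ∣ Fintype.card F - 1 := dvd_trans (by norm_num) h8
  have hdvd4 : 2 * 2 ∣ Fintype.card F - 1 := dvd_trans (by norm_num) h8
  obtain ⟨h20, h31⟩ := hα.count_octicFamily_eq h0 h8 hθ hneg h4 hA
  have hsum := hα.sum_count_octicFamily h0 h8
  have halt := hα.alternating_sum_count_octicFamily h0 h8
  simp only [sum_range_succ, range_zero, sum_empty, h20, h31] at hsum halt
  have count_eq {k : ℕ} {x : F} (hx : x ∈ cycClass α 2 k)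
      (hk : (externalDiff (octicFamily α)).count (α ^ (k + 2)) =
        (externalDiff (octicFamily α)).count (α ^ k)) :
      (externalDiff (octicFamily α)).count x = (externalDiff (octicFamily α)).count (α ^ k) := by
    have hinv := hα.count_externalDiff_octicFamily_mul h0 h8
    rw [← hα.cycClass_union_cycClass_add h0 hdvd4] at hx
    rcases mem_union.1 hx with hx | hx
    · exact apply_eq_of_mem_cycClass (w := fun x => (externalDiff _).count x) hinv hx
    · exact (apply_eq_of_mem_cycClass (w := fun x => (externalDiff _).count x) hinv hx).trans hk
  refine ⟨(externalDiff (octicFamily α)).count (α ^ 0),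
    (externalDiff (octicFamily α)).count (α ^ 1), by lia, by lia,
    eq_nsmul_val_add_nsmul_val_sdiff (fun h => ne_zero_of_mem_cycClass h0 h rfl)
      (zero_notMem_externalDiff (hα.pairwise_disjoint_octicFamily h0 h8))
      (fun x hx => count_eq hx h20) fun x hx => count_eq ?_ h31⟩
  rwa [hα.gstar_sdiff_cycClass_two h0 hdvd2] at hx

theorem isEPDF_octicFamily (hα : IsPrimitiveElt α) (h0 : α ≠ 0) (h8 : 8 ∣ Fintype.card F - 1)
    {T : Finset F} {lam mu : ℕ}
    (h : externalDiff (octicFamily α) = lam • T.val + mu • (Gstar F \ T).val) :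
    IsEPDF (octicFamily α) (Fintype.card F) 4 (fun _ => (Fintype.card F - 1) / 8) T lam mu := by
  refine ⟨rfl, Fintype.card_fin 4, fun i => ?_, fun i => ?_,
    hα.pairwise_disjoint_octicFamily h0 h8, h⟩
  · rw [octicFamily_eq]
    exact fun h => ne_zero_of_mem_cycClass h0 h rfl
  · rw [octicFamily_eq]
    exact hα.card_cycClass h0 h8 _

theorem exists_mod_four_eq_one_card_eq_sq_add (hα : IsPrimitiveElt α) (h0 : α ≠ 0)
    (h4 : 4 ∣ Fintype.card F - 1) :
    ∃ x : ℤ, x % 4 = 1 ∧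
      (Fintype.card F : ℤ) = x ^ 2 + 4 * classSum α 4 (quadraticChar F) 1 ^ 2 := by
  set X := classSum α 4 (quadraticChar F) 0 - classSum α 4 (quadraticChar F) 2
  have hX := hα.card_eq_sq_add_four_mul_sq h0 h4
  have hodd : Odd X := by
    have hq := Fintype.one_lt_card (α := F)
    have hsq : Odd (X ^ 2) := by
      rw [← sub_eq_iff_eq_add.2 hX, Int.odd_iff]
      lia
    exact (Int.odd_pow' two_ne_zero).1 hsq
  obtain h | h : X % 4 = 1 ∨ -X % 4 = 1 := by
    rw [Int.odd_iff] at hodd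
    lia
  · exact ⟨X, h, hX⟩
  · exact ⟨-X, h, by rw [hX, neg_sq]⟩

end IsPrimitiveElt

end MainTheorem


/-- Let `q = p^m ≡ 1 (mod 16)` be a prime power in which `2` is not a
quartic residue, and let `a` be the integer with `q = a² + 2b²`, `a ≡ 1 (mod 4)`, with
`a = -3`.  Then there are integers `x ≡ 1 (mod 4)` and `y` with `q = x² + 4y²` such
that `D = {C_0^8, C_1^8, C_4^8, C_5^8}` satisfies
`∑_{i≠j} Δ(D_i,D_j) = ((3q-3+8y)/16) • C_0^2 + ((3q-3-8y)/16) • C_1^2`; in particular,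
`D` is a `(q,4,(q-1)/8;(3q-3+8y)/16,(3q-3-8y)/16)`-EPDF relative to `C_0^2` if `y ≠ 0`,
and a `(q,4,(q-1)/8,(3q-3)/16)`-EDF if `y = 0`. -/
theorem stmt_17 {F : Type*} [Field F] [Fintype F] [DecidableEq F]
    (q p m : ℕ) (hp : p.Prime) (hq : Fintype.card F = q) (hqpm : q = p ^ m)
    (hq16 : q % 16 = 1)
    (α : F) (hα : IsPrimitiveElt α)
    (h2 : (2 : F) ∉ cycClass α 4 0)
    (a b : ℤ) (hab : (q : ℤ) = a ^ 2 + 2 * b ^ 2) (ha4 : a % 4 = 1) (ha : a = -3) :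
    ∃ x y : ℤ, x % 4 = 1 ∧ (q : ℤ) = x ^ 2 + 4 * y ^ 2 ∧
      ∃ lam mu : ℕ,
        16 * (lam : ℤ) = 3 * (q : ℤ) - 3 + 8 * y ∧
        16 * (mu : ℤ) = 3 * (q : ℤ) - 3 - 8 * y ∧
        (∑ i, ∑ j ∈ Finset.univ.erase i,
            extDiff (![cycClass α 8 0, cycClass α 8 1, cycClass α 8 4,
              cycClass α 8 5] i)
              (![cycClass α 8 0, cycClass α 8 1, cycClass α 8 4, cycClass α 8 5] j)) =
          lam • (cycClass α 2 0).val + mu • (cycClass α 2 1).val ∧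
        (y ≠ 0 →
          IsEPDF ![cycClass α 8 0, cycClass α 8 1, cycClass α 8 4, cycClass α 8 5]
            q 4 (fun _ => (q - 1) / 8) (cycClass α 2 0) lam mu) ∧
        (y = 0 →
          IsEDF ![cycClass α 8 0, cycClass α 8 1, cycClass α 8 4, cycClass α 8 5]
            q 4 (fun _ => (q - 1) / 8) lam) := by
  subst hq ha
  have h16 : 16 ∣ Fintype.card F - 1 := by lia
  have h8 : 8 ∣ Fintype.card F - 1 := dvd_trans (by norm_num) h16
  have h0 : α ≠ 0 := hα.ne_zero (by have := Fintype.one_lt_card (α := F); lia)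
  have hp8 : 8 ∣ p - 1 := by
    by_contra h
    exact h2 (hα.two_mem_cycClass_four_zero h0 hp hqpm hq16 h)
  obtain ⟨θ, hθ⟩ := MulChar.exists_mulChar_orderOf F h8 (Complex.isPrimitiveRoot_exp 8 (by simp))
  have hneg : θ (-1) = 1 := hα.mulChar_neg_one_eq_one h0 (n := 8) h16 (hθ ▸ pow_orderOf_eq_one θ)
  have hfour : θ 4 = -1 := hα.mulChar_four_eq_neg_one h0 h8 hθ h2
  have hA : octicJacobiRe α = 3 :=
    hα.octicJacobiRe_eq_three h0 hp hqpm (by have := hp.pos; lia) hθ hneg hfour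
      (by simpa using hab)
  obtain ⟨x, hx, hxy⟩ := hα.exists_mod_four_eq_one_card_eq_sq_add h0 (dvd_trans (by norm_num) h8)
  obtain ⟨lam, mu, hlam, hmu, hD⟩ :=
    hα.exists_externalDiff_octicFamily_eq h0 h8 hθ hneg hfour hA
  refine ⟨x, classSum α 4 (quadraticChar F) 1, hx, hxy, lam, mu, hlam, hmu, ?_,
    fun _ => hα.isEPDF_octicFamily h0 h8 hD, fun hy => ?_⟩
  · rwa [hα.gstar_sdiff_cycClass_two h0 (dvd_trans (by norm_num) h8)] at hD
  · obtain rfl : lam = mu := by lia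
    exact (hα.isEPDF_octicFamily h0 h8 hD).isEDF fun h => ne_zero_of_mem_cycClass h0 h rfl
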